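/- Let m̂ ∈ P₂(ℝ^d), R ≥ 0, δ > 0 and u ∈ U. Let m : [s, s+τ] → P₂(ℝ^d) be a W₂-continuous solution of the continuity equation ∂_t m_t + div(f(x,m_t,u)m_t) = 0 with constant control u, with m_s ∈ B_R(m̂) and 0 < τ < δ. Then for all t ∈ [s, s+τ]: W₂(m_t, m_s) ≤ C₂(R)·(t − s), where C₂(R) = C₁e^{C₁δ}(1 + 2(C₁δ + ς₂(m̂) + R)e^{2C₁δ}). -/

import Mathlib

open MeasureTheory Set Filter Topology
open scoped ENNReal NNReal InnerProductSpace

noncomputable section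

/-- `ℝ^d` with the Euclidean structure. -/
abbrev Ed (d : ℕ) : Type := EuclideanSpace ℝ (Fin d)

/-- A Borel probability measure with finite second moment. -/
def IsP2Meas {E : Type*} [NormedAddCommGroup E] [MeasurableSpace E] (μ : Measure E) : Prop :=
  IsProbabilityMeasure μ ∧ ∫⁻ x, (‖x‖₊ : ℝ≥0∞) ^ 2 ∂μ < ⊤

/-- The Wasserstein space `P₂(ℝ^d)` of Borel probability measures with finite second moment. -/
def P2 (d : ℕ) : Type := {μ : Measure (Ed d) // IsP2Meas μ}

/-- `ς₂(μ)`, the square root of the second moment of `μ`. -/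
def varsigma2 {d : ℕ} (μ : P2 d) : ℝ :=
  Real.sqrt (∫⁻ x, (‖x‖₊ : ℝ≥0∞) ^ 2 ∂μ.1).toReal

/-- `π` is a plan (coupling) between `μ` and `ν`. -/
def IsCoupling {d : ℕ} (π : Measure (Ed d × Ed d)) (μ ν : P2 d) : Prop :=
  π.map Prod.fst = μ.1 ∧ π.map Prod.snd = ν.1

/-- The quadratic transport cost of a plan. -/
def Wcost {d : ℕ} (π : Measure (Ed d × Ed d)) : ℝ≥0∞ :=
  ∫⁻ p, (‖p.1 - p.2‖₊ : ℝ≥0∞) ^ 2 ∂π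

/-- The 2-Wasserstein distance. -/
def W2 {d : ℕ} (μ ν : P2 d) : ℝ :=
  Real.sqrt (⨅ π ∈ {π : Measure (Ed d × Ed d) | IsCoupling π μ ν}, Wcost π).toReal

/-- `π ∈ Π_o(μ,ν)` : an optimal plan between `μ` and `ν`. -/
def IsOptPlan {d : ℕ} (π : Measure (Ed d × Ed d)) (μ ν : P2 d) : Prop :=
  IsCoupling π μ ν ∧ ∀ π' : Measure (Ed d × Ed d), IsCoupling π' μ ν → Wcost π ≤ Wcost π'

/-- The closed Wasserstein ball `B_R(m̂)`. -/
def ballW {d : ℕ} (mhat : P2 d) (R : ℝ) : Set (P2 d) := {μ | W2 mhat μ ≤ R}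

/-- The open Wasserstein ball `O_R(m̂)`. -/
def oballW {d : ℕ} (mhat : P2 d) (R : ℝ) : Set (P2 d) := {μ | W2 mhat μ < R}

/-- The Dirac measure at the origin as an element of `P₂(ℝ^d)`. -/
def dirac0 (d : ℕ) : P2 d :=
  ⟨Measure.dirac 0, ⟨by infer_instance, by rw [lintegral_dirac]; simp⟩⟩

/-- The class `UC_m̂` : nonnegative, uniformly continuous on every bounded set,
positive-definite at `m̂`. -/
structure UCmem {d : ℕ} (mhat : P2 d) (φ : P2 d → ℝ) : Prop where
  nonneg : ∀ μ : P2 d, 0 ≤ φ μ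
  unif_cont : ∀ R > (0 : ℝ), ∀ η > (0 : ℝ), ∃ δ > (0 : ℝ), ∀ μ ν : P2 d,
    W2 mhat μ ≤ R → W2 mhat ν ≤ R → W2 μ ν ≤ δ → |φ μ - φ ν| ≤ η
  zero_at : φ mhat = 0
  pos_off : ∀ μ : P2 d, μ ≠ mhat → 0 < φ μ

/-- The inf-convolution `φ_κ`. -/
def infConv {d : ℕ} (φ : P2 d → ℝ) (κ : ℝ) (m : P2 d) : ℝ :=
  ⨅ μ : P2 d, (φ μ + 1 / (2 * κ ^ 2) * W2 m μ ^ 2)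

/-- `S(R) = sup_{μ ∈ B_R(m̂)} φ(μ)`. -/
def Sfun {d : ℕ} (mhat : P2 d) (φ : P2 d → ℝ) (R : ℝ) : ℝ := sSup (φ '' ballW mhat R)

/-- `I(R) = inf_{μ ∉ O_R(m̂)} φ(μ)`. -/
def Ifun {d : ℕ} (mhat : P2 d) (φ : P2 d → ℝ) (R : ℝ) : ℝ := sInf (φ '' (oballW mhat R)ᶜ)

/-- `G_R = {μ : φ(μ) ≤ I(R)/2}`. -/
def Gset {d : ℕ} (mhat : P2 d) (φ : P2 d → ℝ) (R : ℝ) : Set (P2 d) :=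
  {μ | φ μ ≤ Ifun mhat φ R / 2}

/-- `G_R^κ = {μ : φ_κ(μ) ≤ I(R)/2}`. -/
def GsetK {d : ℕ} (mhat : P2 d) (φ : P2 d → ℝ) (κ R : ℝ) : Set (P2 d) :=
  {μ | infConv φ κ μ ≤ Ifun mhat φ R / 2}

/-- `𝓡(R) = sup{r ≥ 0 : B_r(m̂) ⊆ G_R}`. -/
def Rfun {d : ℕ} (mhat : P2 d) (φ : P2 d → ℝ) (R : ℝ) : ℝ :=
  sSup {r : ℝ | 0 ≤ r ∧ ballW mhat r ⊆ Gset mhat φ R}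

/-- `M_κ^ε(R) = κ√(2S(R)+ε²κ²) − εκ²`. -/
def Mke {d : ℕ} (mhat : P2 d) (φ : P2 d → ℝ) (κ ε R : ℝ) : ℝ :=
  κ * Real.sqrt (2 * Sfun mhat φ R + ε ^ 2 * κ ^ 2) - ε * κ ^ 2

/-- `M^ε(R) = R + √(2S(R)+ε²)`. -/
def Me {d : ℕ} (mhat : P2 d) (φ : P2 d → ℝ) (ε R : ℝ) : ℝ :=
  R + Real.sqrt (2 * Sfun mhat φ R + ε ^ 2)

/-- `ω_R^ε(δ)`, the modulus of continuity of `φ` on `B_{M^ε(R)}(m̂)`. -/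
def omegaR {d : ℕ} (mhat : P2 d) (φ : P2 d → ℝ) (ε R δ : ℝ) : ℝ :=
  sSup {c : ℝ | ∃ ν₁ ν₂ : P2 d, W2 ν₁ ν₂ ≤ δ ∧ W2 mhat ν₁ ≤ Me mhat φ ε R ∧
    W2 mhat ν₂ ≤ Me mhat φ ε R ∧ c = |φ ν₁ - φ ν₂|}

/-- `K_κ^ε(R) = εκ² + κ√(ε²κ² + 2ω_R^ε(M_κ^ε(R)))`. -/
def Kke {d : ℕ} (mhat : P2 d) (φ : P2 d → ℝ) (κ ε R : ℝ) : ℝ :=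
  ε * κ ^ 2 + κ * Real.sqrt (ε ^ 2 * κ ^ 2 + 2 * omegaR mhat φ ε R (Mke mhat φ κ ε R))

/-- `N_κ^ε(R,m) = εκ√(2φ_κ(m)) + ε·M_κ^ε(R)`. -/
def Nke {d : ℕ} (mhat : P2 d) (φ : P2 d → ℝ) (κ ε R : ℝ) (m : P2 d) : ℝ :=
  ε * κ * Real.sqrt (2 * infConv φ κ m) + ε * Mke mhat φ κ ε R

/-- `μ̄` is an Ekeland point for `(φ,κ,ε,m)`. -/
def EkelandPt {d : ℕ} (φ : P2 d → ℝ) (κ ε : ℝ) (m μb : P2 d) : Prop :=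
  (φ μb + 1 / (2 * κ ^ 2) * W2 m μb ^ 2 ≤ φ m - ε * W2 μb m) ∧
  ∀ μ : P2 d, φ μb + 1 / (2 * κ ^ 2) * W2 m μb ^ 2 ≤
    φ μ + 1 / (2 * κ ^ 2) * W2 m μ ^ 2 + ε * W2 μb μ

/-- The proximal subgradient inequality at `m` with target `μ`, slope measure `α`
and parameter `σ`. -/
def ProxIneq {d : ℕ} (φ : P2 d → ℝ) (ε σ : ℝ) (m : P2 d)
    (α : Measure (Ed d × Ed d)) (μ : P2 d) : Prop :=
  ∀ β : Measure (Ed d × Ed d × Ed d), IsP2Meas β →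
    IsCoupling (β.map fun z => (z.1, z.2.1)) m μ →
    β.map (fun z => (z.1, z.2.2)) = α →
    φ m + ∫ z, ⟪z.2.2, z.2.1 - z.1⟫_ℝ ∂β - σ * ∫ z, ‖z.2.1 - z.1‖ ^ 2 ∂β
      - ε * W2 m μ ≤ φ μ

/-- `α ∈ ∂_P^ε φ(m)` : proximal `ε`-subgradient. -/
def ProxSubgrad {d : ℕ} (φ : P2 d → ℝ) (ε : ℝ) (m : P2 d)
    (α : Measure (Ed d × Ed d)) : Prop :=
  IsP2Meas α ∧ ∃ σ > (0 : ℝ), ∃ r > (0 : ℝ), ∀ μ : P2 d, W2 m μ ≤ r → ProxIneq φ ε σ m α μ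

/-- `(φ,ψ)` is a control-Lyapunov pair at `m̂` for the dynamics `f`, with threshold `ε₀`. -/
structure IsCLP {d : ℕ} {U : Type*} (f : Ed d → P2 d → U → Ed d) (mhat : P2 d)
    (φ : P2 d → ℝ) (ψ : P2 d → ℝ → ℝ) (ε₀ : ℝ) : Prop where
  phi_uc : UCmem mhat φ
  psi_pos : ∀ (m : P2 d) (ε : ℝ), 0 < ε → 0 < ψ m ε
  psi_cont : ∀ (m : P2 d) (ε : ℝ), 0 < ε → ∀ η > (0 : ℝ), ∃ δ > (0 : ℝ),
    ∀ (m' : P2 d) (ε' : ℝ), 0 < ε' → W2 m m' < δ → |ε - ε'| < δ → |ψ m ε - ψ m' ε'| < η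
  level_bdd : ∀ c : ℝ, ∃ K : ℝ, ∀ μ : P2 d, φ μ ≤ c → W2 mhat μ ≤ K
  psi_inf_pos : ∀ r R : ℝ, 0 < r → r < R → ∀ ε > (0 : ℝ), ∃ g > (0 : ℝ),
    ∀ m : P2 d, W2 mhat m ≤ R → ¬ W2 mhat m < r → g ≤ ψ m ε
  psi_mono : ∀ (m : P2 d) (ε ε' : ℝ), 0 < ε → ε ≤ ε' → ψ m ε ≤ ψ m ε'
  eps0_pos : 0 < ε₀
  decrease : ∀ ε : ℝ, 0 < ε → ε < ε₀ → ∀ (m : P2 d) (α : Measure (Ed d × Ed d)),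
    ProxSubgrad φ ε m α → ∃ u : U, ∫ z, ⟪z.2, f z.1 m u⟫_ℝ ∂α ≤ -ψ m ε

/-- A partition of `[0,∞)`. -/
def IsPartition (θ : ℕ → ℝ) : Prop :=
  θ 0 = 0 ∧ StrictMono θ ∧ Tendsto θ atTop atTop

/-- The steps of the partition `θ` lie in `[δ₁, δ₂]` (i.e. `θ ∈ Θ(δ₁,δ₂)`). -/
def StepIn (θ : ℕ → ℝ) (δ₁ δ₂ : ℝ) : Prop :=
  ∀ i : ℕ, δ₁ ≤ θ (i + 1) - θ i ∧ θ (i + 1) - θ i ≤ δ₂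

/-- `W₂`-continuity of a measure-valued curve on `[a,b]`. -/
def W2ContinuousOn {d : ℕ} (m : ℝ → P2 d) (a b : ℝ) : Prop :=
  ∀ t ∈ Icc a b, ∀ η > (0 : ℝ), ∃ δ > (0 : ℝ), ∀ s ∈ Icc a b, |s - t| < δ →
    W2 (m s) (m t) < η

/-- `m` is a `W₂`-continuous distributional solution of the non-local continuity equation
`∂_t m_t + div(f(x,m_t,u) m_t) = 0` on `[a,b]` with constant control `u`. -/
def SolvesCE {d : ℕ} {U : Type*} (f : Ed d → P2 d → U → Ed d) (u : U)
    (m : ℝ → P2 d) (a b : ℝ) : Prop :=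
  W2ContinuousOn m a b ∧
  ∀ χ : Ed d × ℝ → ℝ, ContDiff ℝ (⊤ : ℕ∞) χ → HasCompactSupport χ →
    tsupport χ ⊆ univ ×ˢ Ioo a b →
    ∫ t in a..b, ∫ x, (deriv (fun s : ℝ => χ (x, s)) t +
      fderiv ℝ (fun y : Ed d => χ (y, t)) x (f x (m t) u)) ∂(m t).1 = 0

/-- A `θ`-trajectory of the controlled continuity equation under the feedback `k`,
starting from `m_*`. -/
def IsTraj {d : ℕ} {U : Type*} (f : Ed d → P2 d → U → Ed d) (k : P2 d → U)
    (θ : ℕ → ℝ) (mstar : P2 d) (m : ℝ → P2 d) : Prop :=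
  m 0 = mstar ∧ ∀ i : ℕ, SolvesCE f (k (m (θ i))) m (θ i) (θ (i + 1))

/-- The extremal-shift value `∫ ((x−y)/κ²)·f(x,m,u) dπ(x,y)`. -/
def shiftVal {d : ℕ} {U : Type*} (f : Ed d → P2 d → U → Ed d) (κ : ℝ)
    (π : Measure (Ed d × Ed d)) (m : P2 d) (u : U) : ℝ :=
  ∫ p, ⟪(κ ^ 2)⁻¹ • (p.1 - p.2), f p.1 m u⟫_ℝ ∂π

/-- `k` is an extremal-shift feedback associated with the plan selection `πsel`. -/
def IsExtremalShift {d : ℕ} {U : Type*} (f : Ed d → P2 d → U → Ed d) (κ : ℝ)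
    (πsel : P2 d → Measure (Ed d × Ed d)) (k : P2 d → U) : Prop :=
  ∀ (m : P2 d) (u : U), shiftVal f κ (πsel m) m (k m) ≤ shiftVal f κ (πsel m) m u

/-- `C₂(R)` (computed with time-step bound `δ` and `s = ς₂(m̂)`). -/
def C2const (C₁ δ s R : ℝ) : ℝ :=
  C₁ * Real.exp (C₁ * δ) * (1 + 2 * (C₁ * δ + s + R) * Real.exp (2 * C₁ * δ))

/-- `C₃(R)` (computed with time-step bound `δ` and `s = ς₂(m̂)`). -/
def C3const (C₀ C₁ δ s R : ℝ) : ℝ :=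
  C₀ * (C₁ * Real.exp (C₁ * δ) * (1 + 2 * (C₁ * δ + s + R) * Real.exp (2 * C₁ * δ))
    + C2const C₁ δ s R)

/-- A feedback `k` is s-stabilizing at `m̂`. -/
def SStabilizing {d : ℕ} {U : Type*} (f : Ed d → P2 d → U → Ed d) (mhat : P2 d)
    (k : P2 d → U) : Prop :=
  ∃ M : ℝ → ℝ, (∀ R > (0 : ℝ), 0 < M R) ∧
    Tendsto M (nhdsWithin 0 (Ioi 0)) (nhds 0) ∧
    ∀ r R : ℝ, 0 < r → r < R → ∃ δ > (0 : ℝ), ∃ T > (0 : ℝ),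
      ∀ δhat : ℝ, 0 < δhat → δhat < δ →
      ∀ θ : ℕ → ℝ, IsPartition θ → StepIn θ δhat δ →
      ∀ mstar : P2 d, W2 mhat mstar ≤ R →
      ∀ m : ℝ → P2 d, IsTraj f k θ mstar m →
        (∀ t : ℝ, T ≤ t → W2 mhat (m t) ≤ r) ∧ (∀ t : ℝ, 0 ≤ t → W2 mhat (m t) ≤ M R)

/-- coordinatewise truncation -/
def clampE {d : ℕ} (R : ℝ) (x : Ed d) : Ed d := WithLp.toLp 2 fun i => max (-R) (min R (x i))

lemma clampE_lip {d : ℕ} (R : ℝ) : LipschitzWith 1 (clampE (d := d) R) := by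
  refine LipschitzWith.of_dist_le_mul fun x y => ?_
  rw [NNReal.coe_one, one_mul, EuclideanSpace.dist_eq, EuclideanSpace.dist_eq]
  refine Real.sqrt_le_sqrt (Finset.sum_le_sum fun i _ => ?_)
  refine pow_le_pow_left₀ dist_nonneg ?_ 2
  simp only [clampE, Real.dist_eq]
  refine (abs_max_sub_max_le_max _ _ _ _).trans ?_
  simp only [sub_self, abs_zero]
  refine max_le (abs_nonneg _) ((abs_min_sub_min_le_max _ _ _ _).trans ?_)
  simp

lemma clampE_zero {d : ℕ} {R : ℝ} (hR : 0 ≤ R) : clampE (d := d) R 0 = 0 := by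
  ext i; simp [clampE, hR]

lemma norm_clampE_le {d : ℕ} {R : ℝ} (hR : 0 ≤ R) (x : Ed d) : ‖clampE R x‖ ≤ ‖x‖ := by
  have := (clampE_lip R).dist_le_mul x 0
  rwa [clampE_zero hR, dist_zero_right, dist_zero_right, NNReal.coe_one, one_mul] at this

lemma clampE_of_norm_le {d : ℕ} {R : ℝ} {x : Ed d} (hx : ‖x‖ ≤ R) : clampE R x = x := by
  ext i
  have h1 : |x i| ≤ R := by
    have := (EuclideanSpace.norm_eq x)
    have h2 : ‖x i‖ ≤ ‖x‖ := PiLp.norm_apply_le x i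
    rw [Real.norm_eq_abs] at h2
    linarith
  rw [abs_le] at h1
  simp only [clampE]
  rw [min_eq_right h1.2, max_eq_right h1.1]

lemma norm_clampE_le' {d : ℕ} {R : ℝ} (hR : 0 ≤ R) (x : Ed d) : ‖clampE R x‖ ≤ √d * R := by
  rw [EuclideanSpace.norm_eq]
  have : ∑ i, ‖clampE R x i‖ ^ 2 ≤ (√d * R) ^ 2 := by
    rw [mul_pow, Real.sq_sqrt (Nat.cast_nonneg _)]
    calc ∑ i, ‖clampE R x i‖ ^ 2 ≤ ∑ i : Fin d, R ^ 2 := by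
          refine Finset.sum_le_sum fun i _ => pow_le_pow_left₀ (norm_nonneg _) ?_ 2
          rw [Real.norm_eq_abs, abs_le]
          simp only [clampE]
          constructor
          · exact le_max_left _ _
          · exact max_le (by linarith) (min_le_left _ _)
      _ = _ := by simp
  calc _ ≤ √((√d * R) ^ 2) := Real.sqrt_le_sqrt this
    _ = _ := Real.sqrt_sq (by positivity)

/-- forward growth -/
lemma growth_fwd {E : Type*} [NormedAddCommGroup E] [NormedSpace ℝ E] {α α' : ℝ → E} {a b K B : ℝ}
    (hα : ∀ t ∈ Icc a b, HasDerivWithinAt α (α' t) (Icc a b) t)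
    (hb : ∀ t ∈ Icc a b, ‖α' t‖ ≤ K * ‖α t‖ + B) (hab : a ≤ b) :
    ‖α b‖ ≤ gronwallBound ‖α a‖ K B (b - a) := by
  refine norm_le_gronwallBound_of_norm_deriv_right_le (f' := α')
    (fun t ht => (hα t ht).continuousWithinAt) (fun t ht => ?_) le_rfl
    (fun t ht => hb t (Ico_subset_Icc_self ht)) b ⟨hab, le_rfl⟩
  exact (hα t (Ico_subset_Icc_self ht)).mono_of_mem_nhdsWithin (Icc_mem_nhdsGE_of_mem ht)

lemma growth_bwd {E : Type*} [NormedAddCommGroup E] [NormedSpace ℝ E] {α α' : ℝ → E} {a b K B : ℝ}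
    (hα : ∀ t ∈ Icc a b, HasDerivWithinAt α (α' t) (Icc a b) t)
    (hb : ∀ t ∈ Icc a b, ‖α' t‖ ≤ K * ‖α t‖ + B) (hab : a ≤ b) :
    ‖α a‖ ≤ gronwallBound ‖α b‖ K B (b - a) := by
  have := growth_fwd (α := fun t => α (-t)) (α' := fun t => - α' (-t)) (a := -b) (b := -a)
    (K := K) (B := B) (fun t ht => ?_) (fun t ht => ?_) (by linarith)
  · simpa [neg_add_eq_sub, sub_eq_add_neg, add_comm] using this
  · have h1 := hα (-t) ⟨by linarith [ht.2], by linarith [ht.1]⟩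
    have h2 : HasDerivWithinAt (fun t : ℝ => -t) (-1) (Icc (-b) (-a)) t :=
      (hasDerivAt_neg t).hasDerivWithinAt
    have := HasDerivWithinAt.scomp t (t' := Icc a b) h1 h2
      (fun r hr => ⟨by linarith [hr.2], by linarith [hr.1]⟩)
    simpa [Function.comp_def] using this
  · rw [norm_neg]
    exact hb (-t) ⟨by linarith [ht.2], by linarith [ht.1]⟩

/-- existence on a compact interval -/
lemma ode_exists_Icc {d : ℕ} {v : ℝ → Ed d → Ed d} {K : ℝ≥0} (hv : ∀ t, LipschitzWith K (v t))
    (hc : ∀ x, Continuous fun t => v t x) {a b t₀ : ℝ} (ht : t₀ ∈ Icc a b) (x₀ : Ed d) :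
    ∃ α : ℝ → Ed d, α t₀ = x₀ ∧ ∀ t ∈ Icc a b, HasDerivWithinAt α (v t (α t)) (Icc a b) t := by
  obtain ⟨B, hB⟩ := (isCompact_Icc (a := a) (b := b)).exists_bound_of_continuousOn (hc 0).continuousOn
  have hB0 : 0 ≤ B := (norm_nonneg _).trans (hB t₀ ht)
  have hgr : ∀ t ∈ Icc a b, ∀ x, ‖v t x‖ ≤ K * ‖x‖ + B := by
    intro t ht x
    have h1 := (hv t).dist_le_mul x 0
    rw [dist_eq_norm, dist_zero_right] at h1
    have h2 : ‖v t x‖ ≤ ‖v t x - v t 0‖ + ‖v t 0‖ := by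
      simpa using norm_add_le (v t x - v t 0) (v t 0)
    linarith [hB t ht]
  set R := gronwallBound ‖x₀‖ K B (b - a) with hR
  have hmono := gronwallBound_mono (norm_nonneg x₀) hB0 K.2
  have hR0 : 0 ≤ R := by
    have := hmono (show 0 ≤ b - a by linarith [ht.1, ht.2])
    rw [gronwallBound_x0] at this
    exact (norm_nonneg _).trans this
  set L : ℝ≥0 := K * ⟨√d * R, by positivity⟩ + ⟨B, hB0⟩
  have hpl : IsPicardLindelof (fun t x => v t (clampE R x)) (⟨t₀, ht⟩ : Icc a b) x₀
      (L * ⟨b - a, by linarith [ht.1, ht.2]⟩) 0 L K := by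
    refine ⟨fun t ht => ?_, fun x hx => (hc _).continuousOn, fun t ht x hx => ?_, ?_⟩
    · have h : LipschitzWith K (fun x => v t (clampE R x)) := by
        have := (hv t).comp (clampE_lip R)
        rwa [mul_one] at this
      exact h.lipschitzOnWith
    · refine (hgr t ht _).trans ?_
      have := norm_clampE_le' hR0 x
      change _ ≤ (K : ℝ) * (√d * R) + B
      gcongr
    · change (L : ℝ) * max (b - t₀) (t₀ - a) ≤ L * (b - a) - 0
      rw [sub_zero]
      refine mul_le_mul_of_nonneg_left (max_le ?_ ?_) L.2
      · linarith [ht.1]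
      · linarith [ht.2]
  obtain ⟨α, h0, hα⟩ := hpl.exists_eq_forall_mem_Icc_hasDerivWithinAt₀
  simp only at h0
  refine ⟨α, h0, fun t ht' => ?_⟩
  have hbd : ∀ t ∈ Icc a b, ‖v t (clampE R (α t))‖ ≤ K * ‖α t‖ + B := by
    intro t ht
    refine (hgr t ht _).trans ?_
    have := norm_clampE_le hR0 (α t)
    gcongr
  have hle : ‖α t‖ ≤ R := by
    rcases le_total t₀ t with h | h
    · have hs : Icc t₀ t ⊆ Icc a b := Icc_subset_Icc ht.1 ht'.2
      have := growth_fwd (α := α) (a := t₀) (b := t) (fun r hr => (hα r (hs hr)).mono hs)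
        (fun r hr => hbd r (hs hr)) h
      rw [h0] at this
      exact this.trans (hmono (by linarith [ht.1, ht'.2]))
    · have hs : Icc t t₀ ⊆ Icc a b := Icc_subset_Icc ht'.1 ht.2
      have := growth_bwd (α := α) (a := t) (b := t₀) (fun r hr => (hα r (hs hr)).mono hs)
        (fun r hr => hbd r (hs hr)) h
      rw [h0] at this
      exact this.trans (hmono (by linarith [ht.2, ht'.1]))
  have := hα t ht'
  rwa [clampE_of_norm_le hle] at this

/-- global existence -/
lemma ode_exists {d : ℕ} {v : ℝ → Ed d → Ed d} {K : ℝ≥0} (hv : ∀ t, LipschitzWith K (v t))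
    (hc : ∀ x, Continuous fun t => v t x) (t₀ : ℝ) (x₀ : Ed d) :
    ∃ α : ℝ → Ed d, α t₀ = x₀ ∧ ∀ t, HasDerivAt α (v t (α t)) t := by
  have hex : ∀ N : ℕ, ∃ α : ℝ → Ed d, α t₀ = x₀ ∧
      ∀ t ∈ Ioo (t₀ - (N + 1)) (t₀ + (N + 1)), HasDerivAt α (v t (α t)) t := by
    intro N
    have hN : (0 : ℝ) ≤ N := Nat.cast_nonneg N
    obtain ⟨α, h0, hα⟩ := ode_exists_Icc hv hc (a := t₀ - (N + 1)) (b := t₀ + (N + 1)) (t₀ := t₀)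
      ⟨by linarith, by linarith⟩ x₀
    exact ⟨α, h0, fun t ht => (hα t (Ioo_subset_Icc_self ht)).hasDerivAt (Icc_mem_nhds ht.1 ht.2)⟩
  choose α h0 hα using hex
  have hag : ∀ N M : ℕ, N ≤ M → EqOn (α N) (α M) (Ioo (t₀ - (N + 1)) (t₀ + (N + 1))) := by
    intro N M hNM
    have hN : (0 : ℝ) ≤ N := Nat.cast_nonneg N
    have hNM' : (N : ℝ) ≤ M := Nat.cast_le.2 hNM
    refine ODE_solution_unique_of_mem_Ioo (v := v) (s := fun _ => univ) (K := K) (t₀ := t₀)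
      (fun t _ => (hv t).lipschitzOnWith) ⟨by linarith, by linarith⟩
      (fun t ht => ⟨hα N t ht, trivial⟩) (fun t ht => ⟨hα M t ?_, trivial⟩) (by rw [h0, h0])
    exact ⟨by linarith [ht.1], by linarith [ht.2]⟩
  set β : ℝ → Ed d := fun t => α ⌈|t - t₀|⌉₊ t with hβ
  have hmem : ∀ t : ℝ, ∀ N : ℕ, |t - t₀| < N + 1 → t ∈ Ioo (t₀ - (N + 1)) (t₀ + (N + 1)) := by
    intro t N h
    rw [abs_lt] at h
    exact ⟨by linarith, by linarith⟩
  have hβeq : ∀ t : ℝ, ∀ N : ℕ, |t - t₀| < N + 1 → β t = α N t := by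
    intro t N h
    have h1 : |t - t₀| < (⌈|t - t₀|⌉₊ : ℝ) + 1 := (Nat.le_ceil _).trans_lt (lt_add_one _)
    rcases le_total N ⌈|t - t₀|⌉₊ with h2 | h2
    · exact (hag _ _ h2 (hmem t N h)).symm
    · exact hag _ _ h2 (hmem t _ h1)
  refine ⟨β, ?_, fun t => ?_⟩
  · rw [hβeq t₀ 0 (by simp), h0]
  · set N := ⌈|t - t₀|⌉₊
    have h1 : |t - t₀| < (N : ℝ) + 1 := (Nat.le_ceil _).trans_lt (lt_add_one _)
    have h2 := hα N t (hmem t N h1)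
    rw [hβeq t N h1]
    refine h2.congr_of_eventuallyEq ?_
    have : ∀ᶠ r in 𝓝 t, |r - t₀| < (N : ℝ) + 1 :=
      (continuous_abs.comp (continuous_id.sub continuous_const)).continuousAt.eventually_lt
        continuousAt_const h1
    filter_upwards [this] with r hr using hβeq r N hr

/-- two sided Lipschitz dependence -/
lemma ode_dist {d : ℕ} {v : ℝ → Ed d → Ed d} {K : ℝ≥0} (hv : ∀ t, LipschitzWith K (v t))
    {α β : ℝ → Ed d} (hα : ∀ t, HasDerivAt α (v t (α t)) t)
    (hβ : ∀ t, HasDerivAt β (v t (β t)) t) (a b : ℝ) :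
    ‖α b - β b‖ ≤ ‖α a - β a‖ * Real.exp (K * |b - a|) := by
  have hd : ∀ t, HasDerivAt (fun r => α r - β r) (v t (α t) - v t (β t)) t :=
    fun t => (hα t).sub (hβ t)
  have hbd : ∀ t, ‖v t (α t) - v t (β t)‖ ≤ K * ‖α t - β t‖ + 0 := by
    intro t
    have := (hv t).dist_le_mul (α t) (β t)
    rw [dist_eq_norm, dist_eq_norm] at this
    linarith
  rcases le_total a b with h | h
  · have := growth_fwd (fun t _ => (hd t).hasDerivWithinAt) (fun t _ => hbd t) h
    rwa [gronwallBound_ε0, ← abs_of_nonneg (sub_nonneg.2 h)] at this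
  · have := growth_bwd (fun t _ => (hd t).hasDerivWithinAt) (fun t _ => hbd t) h
    rwa [gronwallBound_ε0, ← abs_of_nonneg (sub_nonneg.2 h), abs_sub_comm] at this

/-- the flow -/
structure IsFlow {d : ℕ} (v : ℝ → Ed d → Ed d) (T : ℝ) (Ψ Φ : ℝ → Ed d → Ed d) (K : ℝ≥0) :
    Prop where
  init : ∀ p, Ψ T p = p
  initΦ : ∀ p, Φ T p = p
  deriv : ∀ t p, HasDerivAt (fun r => Ψ r p) (v t (Ψ t p)) t
  left_inv : ∀ t p, Φ t (Ψ t p) = p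
  right_inv : ∀ t y, Ψ t (Φ t y) = y
  contΨ : Continuous (fun q : ℝ × Ed d => Ψ q.1 q.2)
  contΦ : Continuous (fun q : ℝ × Ed d => Φ q.1 q.2)
  lipΦ : ∀ t x y, ‖Φ t x - Φ t y‖ ≤ ‖x - y‖ * Real.exp (K * |T - t|)

lemma cont_joint {d : ℕ} {Φ : ℝ → Ed d → Ed d} {K : ℝ≥0} {T : ℝ}
    (h1 : ∀ y, Continuous fun t => Φ t y)
    (h2 : ∀ t x y, ‖Φ t x - Φ t y‖ ≤ ‖x - y‖ * Real.exp (K * |T - t|)) :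
    Continuous (fun q : ℝ × Ed d => Φ q.1 q.2) := by
  rw [continuous_iff_continuousAt]
  rintro ⟨t, x⟩
  rw [ContinuousAt, tendsto_iff_norm_sub_tendsto_zero]
  have hb : Tendsto (fun q : ℝ × Ed d => ‖q.2 - x‖ * Real.exp (K * |T - q.1|) + ‖Φ q.1 x - Φ t x‖)
      (𝓝 (t, x)) (𝓝 0) := by
    have hc : Continuous (fun q : ℝ × Ed d =>
        ‖q.2 - x‖ * Real.exp (K * |T - q.1|) + ‖Φ q.1 x - Φ t x‖) := by
      have := (h1 x).comp (continuous_fst (X := ℝ) (Y := Ed d))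
      simp only [Function.comp_def] at this
      fun_prop
    have := hc.tendsto (t, x)
    simpa using this
  refine squeeze_zero (fun _ => norm_nonneg _) (fun q => ?_) hb
  calc ‖Φ q.1 q.2 - Φ t x‖ = ‖(Φ q.1 q.2 - Φ q.1 x) + (Φ q.1 x - Φ t x)‖ := by simp
    _ ≤ _ := (norm_add_le _ _).trans (by gcongr; exact h2 _ _ _)

lemma exists_flow {d : ℕ} {v : ℝ → Ed d → Ed d} {K : ℝ≥0} (hv : ∀ t, LipschitzWith K (v t))
    (hc : ∀ x, Continuous fun t => v t x) (T : ℝ) :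
    ∃ Ψ Φ : ℝ → Ed d → Ed d, IsFlow v T Ψ Φ K := by
  choose X hX0 hX using ode_exists hv hc
  -- X t₀ x₀ t
  have huniq : ∀ t₀ x₀ t₁ t, X t₁ (X t₀ x₀ t₁) t = X t₀ x₀ t := by
    intro t₀ x₀ t₁ t
    have := ODE_solution_unique_univ (v := v) (s := fun _ => univ) (K := K) (t₀ := t₁)
      (f := X t₁ (X t₀ x₀ t₁)) (g := X t₀ x₀)
      (fun t => (hv t).lipschitzOnWith) (fun t => ⟨hX _ _ t, trivial⟩)
      (fun t => ⟨hX _ _ t, trivial⟩) (hX0 _ _)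
    rw [this]
  have hlip : ∀ t x y r, ‖X t x r - X t y r‖ ≤ ‖x - y‖ * Real.exp (K * |r - t|) := by
    intro t x y r
    have := ode_dist hv (hX t x) (hX t y) t r
    rwa [hX0, hX0] at this
  refine ⟨fun t p => X T p t, fun t y => X t y T, ⟨fun p => hX0 _ _, fun p => hX0 _ _,
    fun t p => hX _ _ _, ?_, ?_, ?_, ?_, ?_⟩⟩
  · intro t p; rw [huniq, hX0]
  · intro t p; rw [huniq, hX0]
  · refine cont_joint (Φ := fun t p => X T p t) (K := K) (T := T) (fun y => ?_) (fun t x y => ?_)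
    · exact continuous_iff_continuousAt.2 fun t => (hX T y t).continuousAt
    · rw [abs_sub_comm]; exact hlip T x y t
  · refine cont_joint (Φ := fun t y => X t y T) (K := K) (T := T) (fun y => ?_)
      (fun t x y => hlip t x y T)
    rw [continuous_iff_continuousAt]
    intro t
    rw [ContinuousAt, tendsto_iff_norm_sub_tendsto_zero]
    have hc1 : Continuous fun r => X t y r :=
      continuous_iff_continuousAt.2 fun r => (hX t y r).continuousAt
    have hb : Tendsto (fun r => ‖y - X t y r‖ * Real.exp (K * |T - r|)) (𝓝 t) (𝓝 0) := by
      have : Continuous (fun r => ‖y - X t y r‖ * Real.exp (K * |T - r|)) := by fun_prop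
      have := this.tendsto t
      simpa [hX0] using this
    refine squeeze_zero (fun _ => norm_nonneg _) (fun r => ?_) hb
    have := hlip r y (X t y r) T
    rwa [huniq] at this
  · exact fun t x y => hlip t x y T


lemma mink {α : Type*} [MeasurableSpace α] {μ : Measure α} {F G H : α → ℝ≥0∞}
    (hG : AEMeasurable G μ) (hH : AEMeasurable H μ) (h : ∀ x, F x ≤ G x + H x) {A B : ℝ≥0∞}
    (hA : ∫⁻ x, G x ^ 2 ∂μ ≤ A ^ 2) (hB : ∫⁻ x, H x ^ 2 ∂μ ≤ B ^ 2) :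
    ∫⁻ x, F x ^ 2 ∂μ ≤ (A + B) ^ 2 := by
  have key := ENNReal.lintegral_Lp_add_le hG hH (p := 2) (by norm_num)
  simp only [ENNReal.rpow_two, Pi.add_apply] at key
  have hs : ∀ {X Y : ℝ≥0∞}, X ≤ Y ^ 2 → X ^ (1 / 2 : ℝ) ≤ Y := by
    intro X Y hXY
    calc X ^ (1 / 2 : ℝ) ≤ (Y ^ 2) ^ (1 / 2 : ℝ) := ENNReal.rpow_le_rpow hXY (by norm_num)
      _ = Y := by
        rw [← ENNReal.rpow_two, ← ENNReal.rpow_mul]; norm_num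
  have h1 := key.trans (add_le_add (hs hA) (hs hB))
  calc ∫⁻ x, F x ^ 2 ∂μ ≤ ∫⁻ x, (G x + H x) ^ 2 ∂μ :=
        lintegral_mono fun x => pow_le_pow_left₀ zero_le (h x) 2
    _ = ((∫⁻ x, (G x + H x) ^ 2 ∂μ) ^ (1 / 2 : ℝ)) ^ 2 := by
        rw [← ENNReal.rpow_two, ← ENNReal.rpow_mul]; norm_num
    _ ≤ _ := pow_le_pow_left₀ zero_le h1 2

lemma sqrt_toReal_le {X : ℝ≥0∞} {c : ℝ} (hc : 0 ≤ c) (h : X ≤ ENNReal.ofReal c ^ 2) :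
    Real.sqrt X.toReal ≤ c := by
  rw [← ENNReal.ofReal_pow hc] at h
  refine (Real.sqrt_le_sqrt (ENNReal.toReal_le_of_le_ofReal (by positivity) h)).trans ?_
  rw [Real.sqrt_sq hc]

lemma eq_sqrt_toReal {X : ℝ≥0∞} (h : X ≠ ⊤) : X = ENNReal.ofReal (Real.sqrt X.toReal) ^ 2 := by
  rw [← ENNReal.ofReal_pow (Real.sqrt_nonneg _), Real.sq_sqrt ENNReal.toReal_nonneg,
    ENNReal.ofReal_toReal h]

lemma varsigma2_nonneg {d : ℕ} (μ : P2 d) : 0 ≤ varsigma2 μ := Real.sqrt_nonneg _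

lemma W2_nonneg {d : ℕ} (μ ν : P2 d) : 0 ≤ W2 μ ν := Real.sqrt_nonneg _

lemma lint_eq {d : ℕ} (μ : P2 d) :
    ∫⁻ x, (‖x‖₊ : ℝ≥0∞) ^ 2 ∂μ.1 = ENNReal.ofReal (varsigma2 μ) ^ 2 :=
  eq_sqrt_toReal μ.2.2.ne

lemma varsigma2_le {d : ℕ} (μ : P2 d) {c : ℝ} (hc : 0 ≤ c)
    (h : ∫⁻ x, (‖x‖₊ : ℝ≥0∞) ^ 2 ∂μ.1 ≤ ENNReal.ofReal c ^ 2) : varsigma2 μ ≤ c :=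
  sqrt_toReal_le hc h

lemma W2_le {d : ℕ} {μ ν : P2 d} {π : Measure (Ed d × Ed d)} (hπ : IsCoupling π μ ν) {c : ℝ}
    (hc : 0 ≤ c) (h : Wcost π ≤ ENNReal.ofReal c ^ 2) : W2 μ ν ≤ c :=
  sqrt_toReal_le hc ((iInf₂_le π hπ).trans h)

lemma coupling_fst {d : ℕ} {μ ν : P2 d} {π : Measure (Ed d × Ed d)} (hπ : IsCoupling π μ ν)
    {F : Ed d → ℝ≥0∞} (hF : Measurable F) : ∫⁻ p, F p.1 ∂π = ∫⁻ x, F x ∂μ.1 := by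
  rw [← hπ.1, lintegral_map hF measurable_fst]

lemma coupling_snd {d : ℕ} {μ ν : P2 d} {π : Measure (Ed d × Ed d)} (hπ : IsCoupling π μ ν)
    {F : Ed d → ℝ≥0∞} (hF : Measurable F) : ∫⁻ p, F p.2 ∂π = ∫⁻ x, F x ∂ν.1 := by
  rw [← hπ.2, lintegral_map hF measurable_snd]

lemma inf_ne_top {d : ℕ} (μ ν : P2 d) :
    (⨅ π ∈ {π : Measure (Ed d × Ed d) | IsCoupling π μ ν}, Wcost π) ≠ ⊤ := by
  have := μ.2.1
  have := ν.2.1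
  have hc : IsCoupling (μ.1.prod ν.1) μ ν := by
    constructor
    · simp [Measure.map_fst_prod]
    · simp [Measure.map_snd_prod]
  have h2 : Wcost (μ.1.prod ν.1) ≤ (ENNReal.ofReal (varsigma2 μ) + ENNReal.ofReal (varsigma2 ν)) ^ 2 := by
    refine mink (G := fun p => (‖p.1‖₊ : ℝ≥0∞)) (H := fun p => (‖p.2‖₊ : ℝ≥0∞)) ?_ ?_ ?_ ?_ ?_
    · fun_prop
    · fun_prop
    · intro p; exact_mod_cast nnnorm_sub_le p.1 p.2
    · rw [coupling_fst hc (F := fun x => (‖x‖₊ : ℝ≥0∞) ^ 2) (by fun_prop), lint_eq]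
    · rw [coupling_snd hc (F := fun x => (‖x‖₊ : ℝ≥0∞) ^ 2) (by fun_prop), lint_eq]
  refine ne_top_of_le_ne_top ?_ (le_trans (iInf₂_le (f := fun (π : Measure (Ed d × Ed d)) (_ : π ∈ {π : Measure (Ed d × Ed d) | IsCoupling π μ ν}) => Wcost π) (μ.1.prod ν.1) hc) h2)
  finiteness

lemma exists_coupling {d : ℕ} {μ ν : P2 d} {η : ℝ} (h : W2 μ ν < η) :
    ∃ π, IsCoupling π μ ν ∧ Wcost π < ENNReal.ofReal η ^ 2 := by
  have h1 := eq_sqrt_toReal (inf_ne_top μ ν)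
  have h2 : (⨅ π ∈ {π : Measure (Ed d × Ed d) | IsCoupling π μ ν}, Wcost π) <
      ENNReal.ofReal η ^ 2 := by
    rw [h1]
    have hη : 0 < η := (W2_nonneg μ ν).trans_lt h
    exact (ENNReal.pow_lt_pow_left_iff (by norm_num)).2 ((ENNReal.ofReal_lt_ofReal_iff hη).2 h)
  simpa [iInf_lt_iff] using h2

lemma varsigma2_le_add {d : ℕ} (μ ν : P2 d) : varsigma2 ν ≤ varsigma2 μ + W2 μ ν := by
  refine le_of_forall_pos_le_add fun e he => ?_
  obtain ⟨π, hπ, hc⟩ := exists_coupling (show W2 μ ν < W2 μ ν + e by linarith)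
  have h0 := varsigma2_nonneg μ
  have h0' := W2_nonneg μ ν
  refine varsigma2_le ν (by positivity) ?_
  rw [add_assoc, ENNReal.ofReal_add h0 (by positivity),
    ← coupling_snd hπ (F := fun x => (‖x‖₊ : ℝ≥0∞) ^ 2) (by fun_prop)]
  refine mink (G := fun p : Ed d × Ed d => (‖p.1‖₊ : ℝ≥0∞)) (H := fun p => (‖p.1 - p.2‖₊ : ℝ≥0∞)) ?_ ?_ ?_ ?_ (?_ : Wcost π ≤ _)
  · fun_prop
  · fun_prop
  · intro p
    have : ‖p.2‖₊ ≤ ‖p.1‖₊ + ‖p.1 - p.2‖₊ := by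
      have := nnnorm_sub_le p.1 (p.1 - p.2)
      simpa using this
    exact_mod_cast this
  · rw [coupling_fst hπ (F := fun x => (‖x‖₊ : ℝ≥0∞) ^ 2) (by fun_prop), lint_eq]
  · exact hc.le

lemma coupling_prob {d : ℕ} {μ ν : P2 d} {π : Measure (Ed d × Ed d)} (hπ : IsCoupling π μ ν) :
    IsProbabilityMeasure π := by
  have := μ.2.1
  have : IsProbabilityMeasure (π.map Prod.fst) := by rw [hπ.1]; infer_instance
  exact Measure.isProbabilityMeasure_of_map Prod.fst

lemma varsigma2_cont {d : ℕ} {m : ℝ → P2 d} {a b : ℝ} (hm : W2ContinuousOn m a b) :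
    ContinuousOn (fun t => varsigma2 (m t)) (Icc a b) := by
  intro t ht
  rw [Metric.continuousWithinAt_iff]
  intro e he
  obtain ⟨δ, hδ, h⟩ := hm t ht e he
  refine ⟨δ, hδ, fun r hr hrt => ?_⟩
  have h1 := h r hr hrt
  rw [Real.dist_eq, abs_lt]
  constructor
  · linarith [varsigma2_le_add (m r) (m t)]
  · obtain ⟨π, hπ, hc⟩ := exists_coupling h1
    have hsw : IsCoupling (π.map Prod.swap) (m t) (m r) := by
      refine ⟨?_, ?_⟩
      · rw [Measure.map_map measurable_fst measurable_swap]; exact hπ.2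
      · rw [Measure.map_map measurable_snd measurable_swap]; exact hπ.1
    obtain ⟨e', h1', he'⟩ := exists_between h1
    obtain ⟨π, hπ, hc⟩ := exists_coupling h1'
    have hsw : IsCoupling (π.map Prod.swap) (m t) (m r) := by
      refine ⟨?_, ?_⟩
      · rw [Measure.map_map measurable_fst measurable_swap]; exact hπ.2
      · rw [Measure.map_map measurable_snd measurable_swap]; exact hπ.1
    have : W2 (m t) (m r) ≤ e' := by
      refine W2_le hsw ((W2_nonneg _ _).trans h1'.le) ?_
      rw [Wcost, lintegral_map (by fun_prop) measurable_swap]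
      refine le_trans (le_of_eq ?_) hc.le
      refine lintegral_congr fun p => ?_
      simp only [Prod.fst_swap, Prod.snd_swap]
      rw [← nnnorm_neg, neg_sub]
    linarith [varsigma2_le_add (m t) (m r)]

lemma pair_cont {d : ℕ} {m : ℝ → P2 d} {a b : ℝ} (hm : W2ContinuousOn m a b)
    {g : Ed d × ℝ → ℝ} (hg : Continuous g) (hgs : HasCompactSupport g) :
    ContinuousOn (fun t => ∫ x, g (x, t) ∂(m t).1) (Icc a b) := by
  obtain ⟨B, hB⟩ := hg.bounded_above_of_compact_support hgs
  have hB0 : 0 ≤ B := (norm_nonneg _).trans (hB 0)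
  have huc := hgs.uniformContinuous_of_continuous hg
  rw [Metric.uniformContinuous_iff] at huc
  have hInt : ∀ t, Integrable (fun x => g (x, t)) (m t).1 := by
    intro t
    have := (m t).2.1
    exact Integrable.of_bound (hg.comp (by fun_prop)).aestronglyMeasurable B
      (Eventually.of_forall fun x => hB _)
  intro t ht
  rw [Metric.continuousWithinAt_iff]
  intro e he
  obtain ⟨δ, hδ, h⟩ := huc (e / 2) (by positivity)
  set η : ℝ := Real.sqrt (e / (4 * ((2 * B / δ ^ 2) + 1))) with hη
  have hη0 : 0 < η := by positivity
  have hη2 : η ^ 2 = e / (4 * ((2 * B / δ ^ 2) + 1)) := Real.sq_sqrt (by positivity)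
  obtain ⟨δ', hδ', h'⟩ := hm t ht η hη0
  refine ⟨min δ δ', by positivity, fun r hr hrt => ?_⟩
  obtain ⟨π, hπ, hc⟩ := exists_coupling (h' r hr (hrt.trans_le (min_le_right _ _)))
  have := coupling_prob hπ
  have hi1 : Integrable (fun p : Ed d × Ed d => g (p.1, r)) π :=
    Integrable.of_bound (hg.comp (by fun_prop)).aestronglyMeasurable B
      (Eventually.of_forall fun x => hB _)
  have hi2 : Integrable (fun p : Ed d × Ed d => g (p.2, t)) π :=
    Integrable.of_bound (hg.comp (by fun_prop)).aestronglyMeasurable B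
      (Eventually.of_forall fun x => hB _)
  have e1 : ∫ x, g (x, r) ∂(m r).1 = ∫ p, g (p.1, r) ∂π := by
    have hc1 : Continuous fun x => g (x, r) := by fun_prop
    rw [← hπ.1]
    exact integral_map (φ := Prod.fst) (f := fun x => g (x, r)) (by fun_prop)
      hc1.aestronglyMeasurable
  have e2 : ∫ x, g (x, t) ∂(m t).1 = ∫ p, g (p.2, t) ∂π := by
    have hc1 : Continuous fun x => g (x, t) := by fun_prop
    rw [← hπ.2]
    exact integral_map (φ := Prod.snd) (f := fun x => g (x, t)) (by fun_prop)
      hc1.aestronglyMeasurable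
  have hWeq : ∫⁻ p : Ed d × Ed d, ENNReal.ofReal (‖p.1 - p.2‖ ^ 2) ∂π = Wcost π := by
    refine lintegral_congr fun p => ?_
    rw [ENNReal.ofReal_pow (norm_nonneg _), ofReal_norm]; rfl
  have hWi : Integrable (fun p : Ed d × Ed d => ‖p.1 - p.2‖ ^ 2) π := by
    refine ⟨by fun_prop, ?_⟩
    rw [hasFiniteIntegral_iff_ofReal (Eventually.of_forall fun p => by positivity), hWeq]
    exact hc.trans_le le_top
  have hW : ∫ p, ‖p.1 - p.2‖ ^ 2 ∂π ≤ η ^ 2 := by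
    rw [integral_eq_lintegral_of_nonneg_ae (Eventually.of_forall fun p => by positivity)
      (by fun_prop), hWeq]
    refine ENNReal.toReal_le_of_le_ofReal (by positivity) ?_
    rw [ENNReal.ofReal_pow hη0.le]; exact hc.le
  have hpt : ∀ p : Ed d × Ed d, ‖g (p.1, r) - g (p.2, t)‖ ≤
      e / 2 + 2 * B / δ ^ 2 * ‖p.1 - p.2‖ ^ 2 := by
    intro p
    by_cases hp : ‖p.1 - p.2‖ < δ
    · have := h (a := (p.1, r)) (b := (p.2, t)) (by
        rw [Prod.dist_eq]
        exact max_lt (by rwa [dist_eq_norm]) (hrt.trans_le (min_le_left _ _)))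
      rw [dist_eq_norm] at this
      have h3 : 0 ≤ 2 * B / δ ^ 2 * ‖p.1 - p.2‖ ^ 2 := by positivity
      linarith
    · push Not at hp
      have h1 : ‖g (p.1, r) - g (p.2, t)‖ ≤ 2 * B := by
        refine (norm_sub_le _ _).trans ?_
        linarith [hB (p.1, r), hB (p.2, t)]
      have h2 : 2 * B ≤ 2 * B / δ ^ 2 * ‖p.1 - p.2‖ ^ 2 := by
        rw [div_mul_eq_mul_div, le_div_iff₀ (by positivity)]
        gcongr
      linarith
  rw [e1, e2, dist_eq_norm, ← integral_sub hi1 hi2]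
  calc ‖∫ p, g (p.1, r) - g (p.2, t) ∂π‖ ≤ ∫ p, (e / 2 + 2 * B / δ ^ 2 * ‖p.1 - p.2‖ ^ 2) ∂π :=
        norm_integral_le_of_norm_le ((integrable_const _).add (hWi.const_mul _))
          (Eventually.of_forall hpt)
    _ = e / 2 + 2 * B / δ ^ 2 * ∫ p, ‖p.1 - p.2‖ ^ 2 ∂π := by
        rw [integral_add (integrable_const _) (hWi.const_mul _), integral_const_mul]
        simp
    _ ≤ e / 2 + 2 * B / δ ^ 2 * η ^ 2 := by gcongr
    _ < e := by
        rw [hη2]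
        set Q := 2 * B / δ ^ 2
        have hQ : 0 ≤ Q := by positivity
        have : Q * (e / (4 * (Q + 1))) < e / 2 := by
          rw [mul_div_assoc', div_lt_div_iff₀ (by positivity) (by norm_num)]
          nlinarith
        linarith


lemma exists_primitive {a b : ℝ} (hab : a < b) {h : ℝ → ℝ} (hh : ContDiff ℝ (⊤ : ℕ∞) h)
    (hcs : HasCompactSupport h) (hs : tsupport h ⊆ Ioo a b) (h0 : ∫ t in a..b, h t = 0) :
    ∃ η : ℝ → ℝ, ContDiff ℝ (⊤ : ℕ∞) η ∧ HasCompactSupport η ∧ tsupport η ⊆ Ioo a b ∧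
      deriv η = h := by
  have hc : Continuous h := hh.continuous
  have hd : ∀ t, HasDerivAt (fun t => ∫ r in a..t, h r) (h t) t := fun t =>
    intervalIntegral.integral_hasDerivAt_right (hc.intervalIntegrable _ _)
      hc.stronglyMeasurable.stronglyMeasurableAtFilter hc.continuousAt
  have hde : deriv (fun t => ∫ r in a..t, h r) = h := funext fun t => (hd t).deriv
  obtain ⟨α, β, haα, hβb, hαβ⟩ : ∃ α β, a < α ∧ β < b ∧ tsupport h ⊆ Icc α β := by
    by_cases hne : (tsupport h).Nonempty
    · obtain ⟨α, hα⟩ := hcs.exists_isLeast hne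
      obtain ⟨β, hβ⟩ := hcs.exists_isGreatest hne
      exact ⟨α, β, (hs hα.1).1, (hs hβ.1).2, fun x hx => ⟨hα.2 hx, hβ.2 hx⟩⟩
    · rw [not_nonempty_iff_eq_empty] at hne
      exact ⟨b, a, hab, hab, by simp [hne]⟩
  have hz : ∀ t, t ∉ Icc α β → h t = 0 := fun t ht =>
    image_eq_zero_of_notMem_tsupport fun h' => ht (hαβ h')
  have hηz : ∀ t, t ∉ Icc α β → ∫ r in a..t, h r = 0 := by
    intro t ht
    rw [mem_Icc, not_and_or, not_le, not_le] at ht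
    rcases ht with ht | ht
    · refine intervalIntegral.integral_zero_ae (Eventually.of_forall fun r hr => hz r ?_)
      intro hr'
      have := hr.2
      rw [le_max_iff] at this
      rcases this with h1 | h1 <;> linarith [hr'.1]
    · rw [← intervalIntegral.integral_add_adjacent_intervals (b := b)
        (hc.intervalIntegrable _ _) (hc.intervalIntegrable _ _), h0, zero_add]
      refine intervalIntegral.integral_zero_ae (Eventually.of_forall fun r hr => hz r ?_)
      intro hr'
      have := hr.1
      rw [min_lt_iff] at this
      rcases this with h1 | h1 <;> linarith [hr'.2]
  have hts : tsupport (fun t => ∫ r in a..t, h r) ⊆ Icc α β := by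
    refine closure_minimal (fun t ht => ?_) isClosed_Icc
    by_contra h'
    exact ht (hηz t h')
  refine ⟨fun t => ∫ r in a..t, h r, ?_, ?_, ?_, hde⟩
  · rw [contDiff_infty_iff_deriv, hde]
    exact ⟨fun t => (hd t).differentiableAt, hh⟩
  · exact HasCompactSupport.of_support_subset_isCompact isCompact_Icc (subset_closure.trans hts)
  · exact fun x hx => ⟨haα.trans_le (hts hx).1, (hts hx).2.trans_lt hβb⟩

lemma duBois {a b : ℝ} (hab : a < b) {F : ℝ → ℝ} (hF : ContinuousOn F (Icc a b))
    (h : ∀ η : ℝ → ℝ, ContDiff ℝ (⊤ : ℕ∞) η → HasCompactSupport η → tsupport η ⊆ Ioo a b →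
      ∫ t in a..b, deriv η t * F t = 0) :
    ∃ k, ∀ t ∈ Icc a b, F t = k := by
  let ψ : ContDiffBump ((a + b) / 2) := ⟨(b - a) / 8, (b - a) / 4, by linarith, by linarith⟩
  have hψs : tsupport (ψ.normed volume) ⊆ Ioo a b := by
    rw [ψ.tsupport_normed_eq, Real.closedBall_eq_Icc]
    intro x hx
    have h1 := hx.1
    have h2 := hx.2
    simp only [ψ] at h1 h2
    constructor <;> linarith
  have hψc : HasCompactSupport (ψ.normed volume) := ψ.hasCompactSupport_normed
  have hψd : ContDiff ℝ (⊤ : ℕ∞) (ψ.normed volume) := ψ.contDiff_normed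
  have hsup : ∀ {g : ℝ → ℝ}, tsupport g ⊆ Ioo a b → ∀ G : ℝ → ℝ,
      ∫ t in a..b, g t * G t = ∫ t, g t * G t := by
    intro g hg G
    refine intervalIntegral.integral_eq_integral_of_support_subset fun t ht => ?_
    have : t ∈ tsupport g := subset_tsupport _ (fun h0 => ht (by simp [h0]))
    exact Ioo_subset_Ioc_self (hg this)
  have hψ1 : ∫ t in a..b, ψ.normed volume t = 1 := by
    have := hsup hψs 1
    simp only [Pi.one_apply, mul_one] at this
    rw [this, ψ.integral_normed]
  have hFi : IntervalIntegrable F volume a b := by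
    apply ContinuousOn.intervalIntegrable; rwa [uIcc_of_le hab.le]
  set k := ∫ t in a..b, ψ.normed volume t * F t with hk
  refine ⟨k, ?_⟩
  have hkey : ∀ᵐ t, t ∈ Ioo a b → F t - k = 0 := by
    refine isOpen_Ioo.ae_eq_zero_of_integral_contDiff_smul_eq_zero ?_ ?_
    · refine ContinuousOn.locallyIntegrableOn ?_ measurableSet_Ioo
      exact (hF.mono Ioo_subset_Icc_self).sub continuousOn_const
    · intro g hg hgc hgs
      simp only [smul_eq_mul]
      rw [← hsup hgs]
      set c := ∫ t in a..b, g t with hc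
      have hts : tsupport (fun t => g t - c * ψ.normed volume t) ⊆
          tsupport g ∪ tsupport (ψ.normed volume) := by
        refine closure_minimal (fun t ht => ?_) ((isClosed_tsupport _).union (isClosed_tsupport _))
        by_contra h'
        rw [mem_union, not_or] at h'
        apply ht
        simp [image_eq_zero_of_notMem_tsupport h'.1, image_eq_zero_of_notMem_tsupport h'.2]
      obtain ⟨η, h1, h2, h3, h4⟩ := exists_primitive hab
        (h := fun t => g t - c * ψ.normed volume t) (hg.sub (contDiff_const.mul hψd))
        (HasCompactSupport.of_support_subset_isCompact (hgc.isCompact.union hψc.isCompact)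
          (subset_closure.trans hts)) (hts.trans (union_subset hgs hψs)) (by
          rw [intervalIntegral.integral_sub (hg.continuous.intervalIntegrable _ _)
            ((hψd.continuous.intervalIntegrable _ _).const_mul c),
            intervalIntegral.integral_const_mul, hψ1, ← hc]; ring)
      have h5 := h η h1 h2 h3
      have i1 : IntervalIntegrable (fun t => g t * F t) volume a b :=
        hFi.continuousOn_mul hg.continuous.continuousOn
      have i2 : IntervalIntegrable (fun t => ψ.normed volume t * F t) volume a b :=
        hFi.continuousOn_mul hψd.continuous.continuousOn
      simp only [h4, sub_mul, mul_assoc] at h5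
      rw [intervalIntegral.integral_sub i1 (i2.const_mul c),
        intervalIntegral.integral_const_mul, ← hk] at h5
      simp only [mul_sub]
      rw [intervalIntegral.integral_sub i1
        ((hg.continuous.intervalIntegrable _ _).mul_const k),
        intervalIntegral.integral_mul_const, ← hc]
      exact h5
  have hE : EqOn F (fun _ => k) (Icc a b) := by
    refine Measure.eqOn_of_ae_eq (μ := volume) ?_ hF continuousOn_const ?_
    · rw [restrict_Ioo_eq_restrict_Icc.symm, Filter.EventuallyEq, ae_restrict_iff' measurableSet_Ioo]
      filter_upwards [hkey] with t ht h'
      linarith [ht h']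
    · rw [interior_Icc, closure_Ioo hab.ne]
  exact fun t ht => hE ht

lemma mollify {G : Type*} [NormedAddCommGroup G] [NormedSpace ℝ G] [FiniteDimensional ℝ G]
    [MeasurableSpace G] [BorelSpace G] {χ : G → ℝ} (hχ : Continuous χ) {R : ℝ}
    (hR : ∀ q, R < ‖q‖ → χ q = 0) {ε : ℝ} (hε : 0 < ε) :
    ∃ χ' : G → ℝ, ContDiff ℝ (⊤ : ℕ∞) χ' ∧ HasCompactSupport χ' ∧
      (∀ p, R + ε < ‖p‖ → χ' p = 0) ∧
      (∀ p e, (∀ q, dist q p < ε → dist (χ q) (χ p) ≤ e) → dist (χ' p) (χ p) ≤ e) ∧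
      (∀ p w κ h₀, 0 < h₀ → 0 ≤ κ → (∀ z h, ‖z‖ < ε → |h| < h₀ →
        |χ (p - z + h • w) - χ (p - z)| ≤ κ * |h|) → |fderiv ℝ χ' p w| ≤ κ) := by
  let μ : Measure G := Measure.addHaar
  let ρ : ContDiffBump (0 : G) := ⟨ε / 2, ε, by linarith, by linarith⟩
  have hρs : Function.support (ρ.normed μ) = Metric.ball 0 ε := ρ.support_normed_eq
  have hρc : Continuous (ρ.normed μ) := (ρ.contDiff_normed (n := 0)).continuous
  have hρcs : HasCompactSupport (ρ.normed μ) := ρ.hasCompactSupport_normed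
  have hρz : ∀ z, ¬ ‖z‖ < ε → ρ.normed μ z = 0 := by
    intro z hz
    by_contra h
    have : z ∈ Function.support (ρ.normed μ) := h
    rw [hρs, mem_ball_zero_iff] at this
    exact hz this
  set χ' : G → ℝ := MeasureTheory.convolution (ρ.normed μ) χ (ContinuousLinearMap.lsmul ℝ ℝ) μ with hχ'
  have hχ'e : ∀ p, χ' p = ∫ z, ρ.normed μ z * χ (p - z) ∂μ := fun p => rfl
  have hInt : ∀ p, Integrable (fun z => ρ.normed μ z * χ (p - z)) μ := by
    intro p
    refine Continuous.integrable_of_hasCompactSupport (by fun_prop) ?_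
    exact hρcs.mul_right
  have hsm : ContDiff ℝ (⊤ : ℕ∞) χ' :=
    hρcs.contDiff_convolution_left _ ρ.contDiff_normed hχ.locallyIntegrable
  have hvan : ∀ p, R + ε < ‖p‖ → χ' p = 0 := by
    intro p hp
    rw [hχ'e]
    refine integral_eq_zero_of_ae (Eventually.of_forall fun z => ?_)
    by_cases hz : ‖z‖ < ε
    · have : R < ‖p - z‖ := by linarith [norm_sub_norm_le p z]
      simp [hR _ this]
    · simp [hρz z hz]
  refine ⟨χ', hsm, ?_, hvan, ?_, ?_⟩
  · have := FiniteDimensional.proper ℝ G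
    refine HasCompactSupport.of_support_subset_isCompact (isCompact_closedBall 0 (R + ε)) ?_
    intro p hp
    rw [mem_closedBall_zero_iff]
    by_contra h
    exact hp (hvan p (not_le.1 h))
  · intro p e h
    exact ρ.dist_normed_convolution_le hχ.aestronglyMeasurable (fun q hq => h q hq)
  · intro p w κ h₀ hh₀ hκ h
    have hd : HasDerivAt (fun r : ℝ => χ' (p + r • w)) (fderiv ℝ χ' p w) 0 := by
      have h1 : HasFDerivAt χ' (fderiv ℝ χ' p) (p + (0 : ℝ) • w) := by
        rw [zero_smul, add_zero]
        exact (hsm.differentiable (by simp) p).hasFDerivAt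
      have h2 : HasDerivAt (fun r : ℝ => p + r • w) w 0 := by
        simpa using ((hasDerivAt_id (0 : ℝ)).smul_const w).const_add p
      exact h1.comp_hasDerivAt (0 : ℝ) h2
    refine hd.le_of_lip' hκ ?_
    filter_upwards [Metric.ball_mem_nhds (0 : ℝ) hh₀] with r hr
    rw [mem_ball_zero_iff, Real.norm_eq_abs] at hr
    simp only [zero_smul, add_zero, sub_zero]
    rw [hχ'e, hχ'e, ← integral_sub (hInt _) (hInt _)]
    have hb : ∀ z, ‖ρ.normed μ z * χ (p + r • w - z) - ρ.normed μ z * χ (p - z)‖ ≤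
        ρ.normed μ z * (κ * |r|) := by
      intro z
      rw [← mul_sub, norm_mul, Real.norm_of_nonneg (ρ.nonneg_normed z)]
      by_cases hz : ‖z‖ < ε
      · have := h z r hz hr
        rw [show p + r • w - z = p - z + r • w by abel]
        exact mul_le_mul_of_nonneg_left this (ρ.nonneg_normed z)
      · simp [hρz z hz]
    refine (norm_integral_le_of_norm_le (ρ.integrable_normed.mul_const _)
      (Eventually.of_forall hb)).trans ?_
    rw [integral_mul_const, ρ.integral_normed, one_mul, Real.norm_eq_abs]

lemma flow_est {d : ℕ} {v : ℝ → Ed d → Ed d} {T : ℝ} {Ψ Φ : ℝ → Ed d → Ed d} {K : ℝ≥0}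
    (hf : IsFlow v T Ψ Φ K) (hvc : Continuous (fun q : ℝ × Ed d => v q.1 q.2))
    {φ : Ed d → ℝ} {L : ℝ≥0} (hφ : LipschitzWith L φ) (a b R : ℝ) {e : ℝ} (he : 0 < e) :
    ∃ ε₀ > 0, ε₀ ≤ 1 / 2 ∧ ∀ t ∈ Icc a b, ∀ x : Ed d, ‖x‖ ≤ R → ∀ (z : Ed d) (r h : ℝ), ‖z‖ < ε₀ →
      |r| < ε₀ → |h| < ε₀ →
      |φ (Φ (t - r + h) (x - z + h • v t x)) - φ (Φ (t - r) (x - z))| ≤ e * |h| := by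
  set E : ℝ := Real.exp (K * (|T - a| + |T - b| + 1)) with hE
  have hE0 : 0 < E := Real.exp_pos _
  set Q : ℝ × ℝ × Ed d → Ed d := fun q => v q.1 (Ψ q.1 (Φ q.2.1 q.2.2)) with hQ
  have hQc : Continuous Q := by
    have h1 : Continuous fun q : ℝ × ℝ × Ed d => Φ q.2.1 q.2.2 :=
      hf.contΦ.comp (by fun_prop : Continuous fun q : ℝ × ℝ × Ed d => (q.2.1, q.2.2))
    have h2 : Continuous fun q : ℝ × ℝ × Ed d => Ψ q.1 (Φ q.2.1 q.2.2) :=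
      hf.contΨ.comp (continuous_fst.prodMk h1)
    exact hvc.comp (continuous_fst.prodMk h2)
  set S : Set (ℝ × ℝ × Ed d) := Icc (a - 1) (b + 1) ×ˢ Icc (a - 1) (b + 1) ×ˢ
    Metric.closedBall 0 (R + 1) with hS
  have hSc : IsCompact S :=
    isCompact_Icc.prod (isCompact_Icc.prod (isCompact_closedBall _ _))
  have hu := hSc.uniformContinuousOn_of_continuous hQc.continuousOn
  rw [Metric.uniformContinuousOn_iff] at hu
  set κ : ℝ := e / (L * E + 1) with hκ
  have hκ0 : 0 < κ := by positivity
  obtain ⟨δ, hδ, hu⟩ := hu κ hκ0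
  refine ⟨min (1 / 2) (δ / 3), by positivity, min_le_left _ _, ?_⟩
  intro t ht x hx z r h hz hr hh
  obtain ⟨hz1, hz2⟩ := lt_min_iff.1 hz
  obtain ⟨hr1, hr2⟩ := lt_min_iff.1 hr
  obtain ⟨hh1, hh2⟩ := lt_min_iff.1 hh
  have hr1' := abs_lt.1 hr1
  have hr2' := abs_lt.1 hr2
  have hh1' := abs_lt.1 hh1
  have hh2' := abs_lt.1 hh2
  set p := Φ (t - r) (x - z) with hp
  have hp' : p = Φ (t - r + h) (Ψ (t - r + h) p) := (hf.left_inv _ _).symm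
  have hxz : ‖x - z‖ ≤ R + 1 := (norm_sub_le _ _).trans (by linarith)
  have hmv : ‖(Ψ (t - r + h) p - (x - z + h • v t x))‖ ≤ κ * |h| := by
    have := Convex.norm_image_sub_le_of_norm_hasDerivWithin_le
      (f := fun σ => Ψ σ p - (x - z + (σ - (t - r)) • v t x))
      (f' := fun σ => v σ (Ψ σ p) - v t x) (C := κ) (s := uIcc (t - r) (t - r + h))
      (x := t - r) (y := t - r + h) (fun σ hσ => ?_) (fun σ hσ => ?_) (convex_uIcc _ _)
      left_mem_uIcc right_mem_uIcc
    · simpa [hp, hf.right_inv] using this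
    · refine HasDerivAt.hasDerivWithinAt ?_
      have h1 := (((hasDerivAt_id σ).sub_const (t - r)).smul_const (v t x)).const_add (x - z)
      have h2 : HasDerivAt (fun σ => Ψ σ p - (x - z + (σ - (t - r)) • v t x))
        (v σ (Ψ σ p) - (1 : ℝ) • v t x) σ := (hf.deriv σ p).sub h1
      rwa [one_smul] at h2
    · have hσ' : |σ - (t - r)| ≤ |h| := by
        have := abs_sub_left_of_mem_uIcc hσ
        simpa using this
      have hσ2 := abs_le.1 hσ'
      have hhh := abs_lt.1 hh2
      have hb1 : |h| < 1 / 2 := hh1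
      have hb2 : |h| < δ / 3 := hh2
      have h1 := hu (σ, t - r, x - z) ?_ (t, t, x) ?_ ?_
      · simp only [hQ, hf.right_inv, dist_eq_norm] at h1
        exact h1.le
      · refine ⟨⟨?_, ?_⟩, ⟨?_, ?_⟩, ?_⟩ <;> simp only
        · linarith [ht.1]
        · linarith [ht.2]
        · linarith [ht.1]
        · linarith [ht.2]
        · rwa [mem_closedBall_zero_iff]
      · refine ⟨⟨?_, ?_⟩, ⟨?_, ?_⟩, ?_⟩ <;> simp only
        · linarith [ht.1]
        · linarith [ht.2]
        · linarith [ht.1]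
        · linarith [ht.2]
        · rw [mem_closedBall_zero_iff]; linarith
      · rw [Prod.dist_eq, Prod.dist_eq]
        refine max_lt ?_ (max_lt ?_ ?_)
        · rw [Real.dist_eq, abs_lt]; constructor <;> simp only <;> linarith
        · rw [Real.dist_eq, abs_lt]; constructor <;> simp only <;> linarith
        · rw [dist_eq_norm]; simp only [sub_sub_cancel_left, norm_neg]; linarith
  have h1 : |φ (Φ (t - r + h) (x - z + h • v t x)) - φ p| ≤
      L * ‖Φ (t - r + h) (x - z + h • v t x) - p‖ := by
    have := hφ.dist_le_mul (Φ (t - r + h) (x - z + h • v t x)) p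
    rwa [Real.dist_eq, dist_eq_norm] at this
  have h2 : ‖Φ (t - r + h) (x - z + h • v t x) - p‖ ≤ (κ * |h|) * E := by
    rw [show Φ (t - r + h) (x - z + h • v t x) - p = Φ (t - r + h) (x - z + h • v t x) -
      Φ (t - r + h) (Ψ (t - r + h) p) from congrArg _ hp']
    refine (hf.lipΦ _ _ _).trans ?_
    rw [norm_sub_rev] at hmv
    refine mul_le_mul hmv ?_ (Real.exp_pos _).le (by positivity)
    refine Real.exp_le_exp.2 (mul_le_mul_of_nonneg_left ?_ K.2)
    rw [abs_le]
    constructor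
    · linarith [ht.2, neg_abs_le (T - b), abs_nonneg (T - a)]
    · linarith [ht.1, le_abs_self (T - a), abs_nonneg (T - b)]
  refine h1.trans ((mul_le_mul_of_nonneg_left h2 L.2).trans ?_)
  have h3 : L * E * κ ≤ e := by
    rw [hκ, mul_div_assoc', div_le_iff₀ (by positivity)]
    nlinarith [L.2, hE0]
  calc (L : ℝ) * (κ * |h| * E) = L * E * κ * |h| := by ring
    _ ≤ e * |h| := mul_le_mul_of_nonneg_right h3 (abs_nonneg _)

lemma test_deriv {d : ℕ} {χ' : Ed d × ℝ → ℝ} (hχ' : Differentiable ℝ χ') {η : ℝ → ℝ}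
    (hη : Differentiable ℝ η) (x w : Ed d) (t : ℝ) :
    deriv (fun s : ℝ => η s * χ' (x, s)) t + fderiv ℝ (fun y : Ed d => η t * χ' (y, t)) x w =
      deriv η t * χ' (x, t) + η t * fderiv ℝ χ' (x, t) (w, 1) := by
  have h0 : HasFDerivAt χ' (fderiv ℝ χ' (x, t)) (x, t) := (hχ' (x, t)).hasFDerivAt
  have h1 : HasDerivAt (fun s : ℝ => χ' (x, s)) (fderiv ℝ χ' (x, t) (0, 1)) t :=
    h0.comp_hasDerivAt t ((hasDerivAt_const t x).prodMk (hasDerivAt_id t))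
  have h2 : HasFDerivAt (fun y : Ed d => χ' (y, t))
      ((fderiv ℝ χ' (x, t)).comp (ContinuousLinearMap.inl ℝ (Ed d) ℝ)) x :=
    h0.comp x (hasFDerivAt_prodMk_left x t)
  have h3 : HasDerivAt (fun s : ℝ => η s * χ' (x, s))
    (deriv η t * χ' (x, t) + η t * fderiv ℝ χ' (x, t) (0, 1)) t := (hη t).hasDerivAt.mul h1
  have h4 := h2.const_mul (η t)
  rw [h3.deriv, h4.fderiv]
  have h5 : fderiv ℝ χ' (x, t) (w, 1) = fderiv ℝ χ' (x, t) (0, 1) + fderiv ℝ χ' (x, t) (w, 0) := by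
    rw [← map_add]; simp
  rw [h5]
  simp
  ring

lemma pairing_const {d : ℕ} {U : Type*} {f : Ed d → P2 d → U → Ed d} {u : U} {m : ℝ → P2 d}
    {a b : ℝ} (hab : a < b) (hsol : SolvesCE f u m a b) {v : ℝ → Ed d → Ed d}
    (hveq : ∀ t ∈ Icc a b, ∀ x, v t x = f x (m t) u)
    (hvc : Continuous (fun q : ℝ × Ed d => v q.1 q.2)) {T : ℝ} {Ψ Φ : ℝ → Ed d → Ed d} {K : ℝ≥0}
    (hf : IsFlow v T Ψ Φ K) {φ : Ed d → ℝ} {L : ℝ≥0} (hφ : LipschitzWith L φ)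
    (hφs : HasCompactSupport φ) :
    ∃ k, ∀ t ∈ Icc a b, ∫ x, φ (Φ t x) ∂(m t).1 = k := by
  have hφc : Continuous φ := hφ.continuous
  let θ : ContDiffBump ((a + b) / 2) := ⟨(b - a) / 2 + 1, (b - a) / 2 + 2, by linarith, by linarith⟩
  have hθ1 : ∀ t ∈ Icc (a - 1) (b + 1), θ t = 1 := by
    intro t ht
    refine θ.one_of_mem_closedBall ?_
    rw [Real.closedBall_eq_Icc]
    constructor <;> simp only [θ] <;> linarith [ht.1, ht.2]
  have hθ0 : ∀ t, θ t ≠ 0 → t ∈ Icc (a - 2) (b + 2) := by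
    intro t ht
    have : t ∈ Function.support θ := ht
    rw [θ.support_eq, Real.ball_eq_Ioo] at this
    have h1 := this.1
    have h2 := this.2
    simp only [θ] at h1 h2
    constructor <;> linarith
  set χ : Ed d × ℝ → ℝ := fun p => θ p.2 * φ (Φ p.2 p.1) with hχ
  have hχc : Continuous χ := by
    have h1 : Continuous fun p : Ed d × ℝ => Φ p.2 p.1 :=
      hf.contΦ.comp (by fun_prop : Continuous fun p : Ed d × ℝ => (p.2, p.1))
    exact (θ.continuous.comp continuous_snd).mul (hφc.comp h1)
  have hcomp : IsCompact ((fun q : ℝ × Ed d => (Ψ q.1 q.2, q.1)) ''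
      (Icc (a - 2) (b + 2) ×ˢ tsupport φ)) :=
    (isCompact_Icc.prod hφs).image (hf.contΨ.prodMk continuous_fst)
  have hsub : Function.support χ ⊆ (fun q : ℝ × Ed d => (Ψ q.1 q.2, q.1)) ''
      (Icc (a - 2) (b + 2) ×ˢ tsupport φ) := by
    rintro ⟨x, t⟩ hxt
    have hxt' : θ t * φ (Φ t x) ≠ 0 := hxt
    refine ⟨(t, Φ t x), ⟨hθ0 t (left_ne_zero_of_mul hxt'),
      subset_tsupport _ (right_ne_zero_of_mul hxt')⟩, ?_⟩
    simp [hf.right_inv]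
  have hχs : HasCompactSupport χ := HasCompactSupport.of_support_subset_isCompact hcomp hsub
  obtain ⟨R, hR⟩ : ∃ R, ∀ q, R < ‖q‖ → χ q = 0 := by
    obtain ⟨R, hR⟩ := hcomp.isBounded.exists_norm_le
    refine ⟨R, fun q hq => ?_⟩
    by_contra h
    exact absurd (hR q (hsub h)) (not_le.2 hq)
  have hχF : ∀ t ∈ Icc a b, ∀ x, χ (x, t) = φ (Φ t x) := by
    intro t ht x
    simp only [hχ]
    rw [hθ1 t ⟨by linarith [ht.1], by linarith [ht.2]⟩, one_mul]
  set F : ℝ → ℝ := fun t => ∫ x, χ (x, t) ∂(m t).1 with hF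
  have hFc : ContinuousOn F (Icc a b) := pair_cont hsol.1 hχc hχs
  obtain ⟨k, hk⟩ : ∃ k, ∀ t ∈ Icc a b, F t = k := by
    refine duBois hab hFc ?_
    intro η hη hηc hηs
    have hη' : Continuous (deriv η) := (hη.continuous_deriv (by simp))
    obtain ⟨M1, hM1⟩ := hη.continuous.bounded_above_of_compact_support hηc
    obtain ⟨M2, hM2⟩ := hη'.bounded_above_of_compact_support hηc.deriv
    have hM10 : 0 ≤ M1 := (norm_nonneg _).trans (hM1 0)
    have hM20 : 0 ≤ M2 := (norm_nonneg _).trans (hM2 0)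
    have hηF : IntervalIntegrable (fun t => deriv η t * F t) volume a b := by
      apply ContinuousOn.intervalIntegrable; rw [uIcc_of_le hab.le]
      exact hη'.continuousOn.mul hFc
    have key : ∀ e > 0, |∫ t in a..b, deriv η t * F t| ≤ (M1 + M2) * (b - a) * e := by
      intro e he
      obtain ⟨ε₀, hε₀, hε₀1, hest⟩ := flow_est hf hvc hφ a b (R + 1) he
      obtain ⟨ε₁, hε₁, huc⟩ :=
        Metric.uniformContinuous_iff.1 (hχs.uniformContinuous_of_continuous hχc) e he
      obtain ⟨χ', hs', hcs', hvan, hclose, hder⟩ := mollify hχc hR (lt_min hε₀ hε₁)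
      have hcl : ∀ p, |χ' p - χ p| ≤ e := fun p =>
        hclose p e fun q hq => (huc (hq.trans_le (min_le_right _ _))).le
      have hD : ∀ t ∈ Icc a b, ∀ x, |fderiv ℝ χ' (x, t) (v t x, 1)| ≤ e := by
        intro t ht x
        by_cases hx : R + min ε₀ ε₁ < ‖((x, t) : Ed d × ℝ)‖
        · have : χ' =ᶠ[𝓝 (x, t)] fun _ => (0 : ℝ) := by
            filter_upwards [(isOpen_lt continuous_const continuous_norm).mem_nhds hx] with p hp
            exact hvan p hp
          rw [this.fderiv_eq]
          simp [he.le]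
        · push Not at hx
          have hmin : min ε₀ ε₁ ≤ ε₀ := min_le_left _ _
          have hxR : ‖x‖ ≤ R + 1 := by
            have := (norm_fst_le ((x, t) : Ed d × ℝ))
            simp only at this
            linarith
          refine hder (x, t) (v t x, 1) e ε₀ hε₀ he.le ?_
          rintro ⟨z, r⟩ h hz hh
          have hz1 : ‖z‖ < ε₀ := ((norm_fst_le ((z, r) : Ed d × ℝ)).trans_lt hz).trans_le hmin
          have hr1 : |r| < ε₀ := ((norm_snd_le ((z, r) : Ed d × ℝ)).trans_lt hz).trans_le hmin
          have h1 := hest t ht x hxR z r h hz1 hr1 hh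
          have hr2 := abs_lt.1 hr1
          have hh2 := abs_lt.1 hh
          have e1 : ((x, t) : Ed d × ℝ) - (z, r) + h • (v t x, 1) =
              (x - z + h • v t x, t - r + h) := by simp
          have e2 : ((x, t) : Ed d × ℝ) - (z, r) = (x - z, t - r) := by simp
          rw [e1, e2]
          simp only [hχ]
          rw [hθ1 (t - r + h) ⟨by linarith [ht.1], by linarith [ht.2]⟩,
            hθ1 (t - r) ⟨by linarith [ht.1], by linarith [ht.2]⟩, one_mul, one_mul]
          exact h1
      have hdiff' : Differentiable ℝ χ' := hs'.differentiable (by simp)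
      have hdiffη : Differentiable ℝ η := hη.differentiable (by simp)
      set J : Ed d × ℝ → ℝ := fun p =>
        deriv η p.2 * χ' p + η p.2 * fderiv ℝ χ' p (v p.2 p.1, 1) with hJ
      have hJc : Continuous J := by
        have h1 : Continuous fun p : Ed d × ℝ => fderiv ℝ χ' p (v p.2 p.1, 1) := by
          refine (hs'.continuous_fderiv (by simp)).clm_apply ?_
          exact (hvc.comp (by fun_prop : Continuous fun p : Ed d × ℝ => (p.2, p.1))).prodMk
            continuous_const
        exact ((hη'.comp continuous_snd).mul hs'.continuous).add
          ((hη.continuous.comp continuous_snd).mul h1)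
      have hJs : HasCompactSupport J := by
        refine HasCompactSupport.of_support_subset_isCompact hcs' ?_
        intro p hp
        by_contra h
        have h1 : χ' p = 0 := image_eq_zero_of_notMem_tsupport h
        have h2 : fderiv ℝ χ' p = 0 := by
          by_contra h3
          exact h (support_fderiv_subset ℝ h3)
        apply hp
        simp [hJ, h1, h2]
      set I : ℝ → ℝ := fun t => ∫ x, J (x, t) ∂(m t).1 with hI
      have hIc : ContinuousOn I (Icc a b) := pair_cont hsol.1 hJc hJs
      have hIi : IntervalIntegrable I volume a b := by
        apply ContinuousOn.intervalIntegrable; rwa [uIcc_of_le hab.le]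
      have hI0 : ∫ t in a..b, I t = 0 := by
        have h1 := hsol.2 (fun p => η p.2 * χ' p) ((hη.comp contDiff_snd).mul hs') ?_ ?_
        · rw [← h1]
          refine intervalIntegral.integral_congr fun t ht => ?_
          rw [uIcc_of_le hab.le] at ht
          refine integral_congr_ae (Eventually.of_forall fun x => ?_)
          simp only [hJ]
          rw [test_deriv hdiff' hdiffη, hveq t ht]
        · exact hcs'.mul_left
        · have : tsupport (fun p : Ed d × ℝ => η p.2 * χ' p) ⊆ Prod.snd ⁻¹' tsupport η := by
            refine closure_minimal (fun p hp => ?_)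
              ((isClosed_tsupport η).preimage continuous_snd)
            exact subset_tsupport _ (left_ne_zero_of_mul hp)
          exact fun p hp => ⟨mem_univ _, hηs (this hp)⟩
      rw [← sub_zero (∫ t in a..b, deriv η t * F t), ← hI0,
        ← intervalIntegral.integral_sub hηF hIi, ← Real.norm_eq_abs]
      have hbd := intervalIntegral.norm_integral_le_of_norm_le_const
        (f := fun t => deriv η t * F t - I t) (a := a) (b := b) (C := (M1 + M2) * e) ?_
      · refine hbd.trans (le_of_eq ?_)
        rw [abs_of_pos (by linarith)]; ring
      · intro t ht
        rw [uIoc_of_le hab.le] at ht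
        have ht' : t ∈ Icc a b := Ioc_subset_Icc_self ht
        have := (m t).2.1
        obtain ⟨B1, hB1⟩ := hχc.bounded_above_of_compact_support hχs
        obtain ⟨B2, hB2⟩ := hJc.bounded_above_of_compact_support hJs
        have hi1 : Integrable (fun x => χ (x, t)) (m t).1 :=
          Integrable.of_bound (hχc.comp (by fun_prop)).aestronglyMeasurable B1
            (Eventually.of_forall fun x => hB1 _)
        have hi2 : Integrable (fun x => J (x, t)) (m t).1 :=
          Integrable.of_bound (hJc.comp (by fun_prop)).aestronglyMeasurable B2
            (Eventually.of_forall fun x => hB2 _)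
        simp only [hF, hI]
        rw [← integral_const_mul, ← integral_sub (hi1.const_mul _) hi2]
        have hb := norm_integral_le_of_norm_le_const (μ := (m t).1)
          (f := fun x => deriv η t * χ (x, t) - J (x, t)) (C := (M1 + M2) * e)
          (Eventually.of_forall fun x => ?_)
        · simpa using hb
        · simp only [hJ]
          have e1 : deriv η t * χ (x, t) - (deriv η t * χ' (x, t) +
              η t * fderiv ℝ χ' (x, t) (v t x, 1)) =
              -(deriv η t * (χ' (x, t) - χ (x, t))) - η t * fderiv ℝ χ' (x, t) (v t x, 1) := by ring
          rw [e1]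
          refine (norm_sub_le _ _).trans ?_
          rw [norm_neg, norm_mul, norm_mul]
          have q1 := mul_le_mul (hM2 t) (hcl (x, t)) (abs_nonneg _) hM20
          have q2 := mul_le_mul (hM1 t) (hD t ht' x) (abs_nonneg _) hM10
          rw [← Real.norm_eq_abs] at q1 q2
          linarith
    have hC : 0 ≤ (M1 + M2) * (b - a) := mul_nonneg (by positivity) (by linarith)
    have : |∫ t in a..b, deriv η t * F t| ≤ 0 := by
      refine le_of_forall_pos_le_add fun e he => ?_
      refine (key (e / ((M1 + M2) * (b - a) + 1)) (by positivity)).trans ?_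
      rw [mul_div_assoc', div_le_iff₀ (by positivity)]
      nlinarith
    exact abs_nonpos_iff.1 this
  refine ⟨k, fun t ht => ?_⟩
  rw [← hk t ht]
  simp only [hF, hχF t ht]

lemma meas_eq {d : ℕ} {μ ν : Measure (Ed d)} [IsProbabilityMeasure μ] [IsProbabilityMeasure ν]
    (h : ∀ (φ : Ed d → ℝ) (L : ℝ≥0), LipschitzWith L φ → HasCompactSupport φ →
      ∫ x, φ x ∂μ = ∫ x, φ x ∂ν) : μ = ν := by
  refine Measure.ext_of_integral_eq_on_compactlySupported fun g => ?_
  have hgc : Continuous g := g.continuous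
  have hgs : HasCompactSupport g := g.hasCompactSupport
  obtain ⟨R, hR⟩ : ∃ R, ∀ q, R < ‖q‖ → g q = 0 := by
    obtain ⟨R, hR⟩ := hgs.isCompact.isBounded.exists_norm_le
    refine ⟨R, fun q hq => ?_⟩
    by_contra h
    exact absurd (hR q (subset_tsupport _ h)) (not_le.2 hq)
  refine eq_of_forall_dist_le fun e he => ?_
  obtain ⟨ε₁, hε₁, huc⟩ :=
    Metric.uniformContinuous_iff.1 (hgs.uniformContinuous_of_continuous hgc) (e / 2) (by positivity)
  obtain ⟨χ', hs', hcs', -, hclose, -⟩ := mollify hgc hR hε₁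
  have hcl : ∀ p, ‖g p - χ' p‖ ≤ e / 2 := fun p => by
    rw [← dist_eq_norm, dist_comm]
    exact hclose p (e / 2) fun q hq => (huc hq).le
  obtain ⟨L, hL⟩ := hs'.lipschitzWith_of_hasCompactSupport hcs' (by simp)
  have h1 := h χ' L hL hcs'
  have key : ∀ (ρ : Measure (Ed d)) [IsProbabilityMeasure ρ],
      dist (∫ x, g x ∂ρ) (∫ x, χ' x ∂ρ) ≤ e / 2 := by
    intro ρ _
    rw [dist_eq_norm, ← integral_sub (hgc.integrable_of_hasCompactSupport hgs)
      (hs'.continuous.integrable_of_hasCompactSupport hcs')]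
    have := norm_integral_le_of_norm_le_const (μ := ρ) (Eventually.of_forall hcl)
    simpa using this
  have k1 := key μ
  have k2 := key ν
  rw [dist_comm, ← h1] at k2
  linarith [dist_triangle (∫ x, g x ∂μ) (∫ x, χ' x ∂μ) (∫ x, g x ∂ν)]

lemma transport {d : ℕ} {U : Type*} {f : Ed d → P2 d → U → Ed d} {C₀ C₁ : ℝ} (hC₀ : 0 < C₀)
    (hC₁ : 0 < C₁)
    (hLip : ∀ (x y : Ed d) (μ ν : P2 d) (u : U),
      ‖f x μ u - f y ν u‖ ≤ C₀ * (‖x - y‖ + W2 μ ν))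
    (hgrowth : ∀ (x : Ed d) (μ : P2 d) (u : U), ‖f x μ u‖ ≤ C₁ * (1 + ‖x‖ + varsigma2 μ))
    {u : U} {a b : ℝ} (hab : a < b) {m : ℝ → P2 d} (hsol : SolvesCE f u m a b)
    {t₁ t₂ : ℝ} (h1 : a ≤ t₁) (h12 : t₁ ≤ t₂) (h2 : t₂ ≤ b) :
    ∃ X : Ed d → Ed d, Continuous X ∧ (m t₁).1.map X = (m t₂).1 ∧
      ∀ S, (∀ r ∈ Icc t₁ t₂, varsigma2 (m r) ≤ S) → ∀ x,
        ‖X x - x‖ ≤ (1 + S + ‖x‖) * (Real.exp (C₁ * (t₂ - t₁)) - 1) := by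
  set v : ℝ → Ed d → Ed d := fun t x => f x (m (projIcc a b hab.le t)) u with hv
  have hveq : ∀ t ∈ Icc a b, ∀ x, v t x = f x (m t) u := by
    intro t ht x
    simp only [hv, projIcc_of_mem hab.le ht]
  set K : ℝ≥0 := ⟨C₀, hC₀.le⟩ with hK
  have W0 : ∀ μ : P2 d, W2 μ μ ≤ 0 := by
    intro μ
    have hc : IsCoupling (μ.1.map fun x => (x, x)) μ μ := by
      constructor
      · rw [Measure.map_map measurable_fst (by fun_prop)]; exact Measure.map_id
      · rw [Measure.map_map measurable_snd (by fun_prop)]; exact Measure.map_id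
    refine W2_le hc le_rfl ?_
    rw [Wcost, lintegral_map (by fun_prop) (by fun_prop)]
    simp
  have hvL : ∀ t, LipschitzWith K (v t) := by
    intro t
    refine LipschitzWith.of_dist_le_mul fun x y => ?_
    rw [dist_eq_norm, dist_eq_norm]
    refine (hLip x y _ _ u).trans ?_
    have := W0 (m (projIcc a b hab.le t))
    exact mul_le_mul_of_nonneg_left (by linarith) hC₀.le
  have hvt : ∀ x, Continuous fun t => v t x := by
    intro x
    have hco : ContinuousOn (fun t => f x (m t) u) (Icc a b) := by
      intro t ht
      rw [Metric.continuousWithinAt_iff]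
      intro e he
      obtain ⟨δ, hδ, h⟩ := hsol.1 t ht (e / C₀) (by positivity)
      refine ⟨δ, hδ, fun r hr hrt => ?_⟩
      have h3 := h r hr hrt
      rw [lt_div_iff₀ hC₀] at h3
      rw [dist_eq_norm]
      refine (hLip x x _ _ u).trans_lt ?_
      simp only [sub_self, norm_zero, zero_add]
      linarith
    exact hco.comp_continuous (continuous_subtype_val.comp continuous_projIcc)
      (fun t => (projIcc a b hab.le t).2)
  have hvc : Continuous (fun q : ℝ × Ed d => v q.1 q.2) :=
    continuous_prod_of_continuous_lipschitzWith' _ K hvL hvt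
  obtain ⟨Ψ, Φ, hf⟩ := exists_flow hvL hvt t₂
  have hXc : Continuous (Φ t₁) := hf.contΦ.comp (by fun_prop : Continuous fun x => (t₁, x))
  refine ⟨Φ t₁, hXc, ?_, ?_⟩
  · have := (m t₁).2.1
    have := (m t₂).2.1
    have := Measure.isProbabilityMeasure_map (μ := (m t₁).1) hXc.measurable.aemeasurable
    refine meas_eq fun φ L hφ hφs => ?_
    obtain ⟨k, hk⟩ := pairing_const hab hsol hveq hvc hf hφ hφs
    rw [integral_map hXc.measurable.aemeasurable hφ.continuous.aestronglyMeasurable,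
      hk t₁ ⟨h1, h12.trans h2⟩, ← hk t₂ ⟨h1.trans h12, h2⟩]
    simp only [hf.initΦ]
  · intro S hS x
    have hg := growth_fwd (α := fun r => Ψ r (Φ t₁ x) - x) (α' := fun r => v r (Ψ r (Φ t₁ x)))
      (a := t₁) (b := t₂) (K := C₁) (B := C₁ * (1 + S + ‖x‖))
      (fun t ht => ((hf.deriv t _).sub_const x).hasDerivWithinAt) (fun t ht => ?_) h12
    · rw [hf.right_inv, hf.init, sub_self, norm_zero, gronwallBound_of_K_ne_0 hC₁.ne'] at hg
      refine hg.trans (le_of_eq ?_)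
      field_simp
      ring
    · rw [hveq t ⟨h1.trans ht.1, ht.2.trans h2⟩]
      refine (hgrowth _ _ _).trans ?_
      rw [← mul_add]
      refine mul_le_mul_of_nonneg_left ?_ hC₁.le
      have q1 : ‖Ψ t (Φ t₁ x)‖ ≤ ‖Ψ t (Φ t₁ x) - x‖ + ‖x‖ := by
        simpa using norm_add_le (Ψ t (Φ t₁ x) - x) x
      linarith [hS t ht]

lemma transport_est {d : ℕ} {μ ν : P2 d} {X : Ed d → Ed d} (hX : Continuous X)
    (hmap : μ.1.map X = ν.1) {S E : ℝ} (hS : 0 ≤ S) (hE : 0 ≤ E)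
    (h : ∀ x, ‖X x - x‖ ≤ (1 + S + ‖x‖) * E) :
    varsigma2 ν ≤ varsigma2 μ + (1 + S + varsigma2 μ) * E ∧
      W2 ν μ ≤ (1 + S + varsigma2 μ) * E := by
  have hp := μ.2.1
  have h0 := varsigma2_nonneg μ
  have key : ∫⁻ x, (‖X x - x‖₊ : ℝ≥0∞) ^ 2 ∂μ.1 ≤
      ENNReal.ofReal ((1 + S + varsigma2 μ) * E) ^ 2 := by
    rw [add_mul, ENNReal.ofReal_add (by positivity) (by positivity)]
    refine mink (G := fun _ => ENNReal.ofReal ((1 + S) * E))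
      (H := fun x => ENNReal.ofReal E * (‖x‖₊ : ℝ≥0∞)) (by fun_prop) (by fun_prop) ?_ ?_ ?_
    · intro x
      have h1 : ENNReal.ofReal E * (‖x‖₊ : ℝ≥0∞) = ENNReal.ofReal (E * ‖x‖) := by
        rw [ENNReal.ofReal_mul hE, ofReal_norm]; rfl
      have h2 : (‖X x - x‖₊ : ℝ≥0∞) = ENNReal.ofReal ‖X x - x‖ := by
        rw [ofReal_norm]; rfl
      rw [h1, h2, ← ENNReal.ofReal_add (by positivity) (by positivity)]
      refine ENNReal.ofReal_le_ofReal ((h x).trans (le_of_eq (by ring)))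
    · simp
    · simp only [mul_pow]
      rw [lintegral_const_mul _ (by fun_prop), lint_eq, ← mul_pow, ← ENNReal.ofReal_mul hE,
        mul_comm E]
  constructor
  · refine varsigma2_le ν (by positivity) ?_
    rw [← hmap, lintegral_map (by fun_prop) hX.measurable,
      ENNReal.ofReal_add h0 (by positivity)]
    refine mink (G := fun x => (‖x‖₊ : ℝ≥0∞)) (H := fun x => (‖X x - x‖₊ : ℝ≥0∞)) (by fun_prop)
      ?_ ?_ (lint_eq μ).le key
    · have := hX.measurable
      fun_prop
    · intro x
      have : ‖X x‖₊ ≤ ‖x‖₊ + ‖X x - x‖₊ := by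
        simpa using nnnorm_add_le x (X x - x)
      exact_mod_cast this
  · have hXm := hX.measurable
    have hc : IsCoupling (μ.1.map fun x => (X x, x)) ν μ := by
      constructor
      · rw [Measure.map_map measurable_fst (by fun_prop)]; exact hmap
      · rw [Measure.map_map measurable_snd (by fun_prop)]; exact Measure.map_id
    refine W2_le hc (by positivity) ?_
    rw [Wcost, lintegral_map (by fun_prop) (by fun_prop)]
    exact key

lemma exp_sub_one_le (y : ℝ) : Real.exp y - 1 ≤ y * Real.exp y := by
  have h1 := Real.add_one_le_exp (-y)
  have h2 : Real.exp (-y) * Real.exp y = 1 := by rw [← Real.exp_add]; simp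
  nlinarith [Real.exp_pos y]

lemma varsigma_gronwall {d : ℕ} {m : ℝ → P2 d} {a b C₁ : ℝ} (hC₁ : 0 < C₁)
    (hm : W2ContinuousOn m a b)
    (H : ∀ t₁ t₂, a ≤ t₁ → t₁ ≤ t₂ → t₂ ≤ b → ∀ S, 0 ≤ S →
      (∀ r ∈ Icc t₁ t₂, varsigma2 (m r) ≤ S) →
      varsigma2 (m t₂) ≤ varsigma2 (m t₁) +
        (1 + S + varsigma2 (m t₁)) * (Real.exp (C₁ * (t₂ - t₁)) - 1)) :
    ∀ t ∈ Icc a b, varsigma2 (m t) ≤ gronwallBound (varsigma2 (m a)) (2 * C₁) C₁ (t - a) := by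
  have hc := varsigma2_cont hm
  refine le_gronwallBound_of_liminf_deriv_right_le (f' := fun t => 2 * C₁ * varsigma2 (m t) + C₁)
    hc ?_ le_rfl (fun _ _ => le_rfl)
  intro t ht r hr
  have h0 := varsigma2_nonneg (m t)
  obtain ⟨e, he, her⟩ : ∃ e > 0, (1 + (varsigma2 (m t) + e) + varsigma2 (m t)) * C₁ < r := by
    refine ⟨(r - (2 * C₁ * varsigma2 (m t) + C₁)) / (2 * C₁), div_pos (by linarith) (by linarith), ?_⟩
    have : (r - (2 * C₁ * varsigma2 (m t) + C₁)) / (2 * C₁) * C₁ =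
      (r - (2 * C₁ * varsigma2 (m t) + C₁)) / 2 := by field_simp
    nlinarith
  have htI : t ∈ Icc a b := Ico_subset_Icc_self ht
  have hd : HasDerivAt (fun z => Real.exp (C₁ * (z - t))) C₁ t := by
    have h1 : HasDerivAt (fun z => C₁ * (z - t)) C₁ t := by
      simpa using ((hasDerivAt_id t).sub_const t).const_mul C₁
    simpa using h1.exp
  have hs : Tendsto (fun z => (1 + (varsigma2 (m t) + e) + varsigma2 (m t)) *
      slope (fun z => Real.exp (C₁ * (z - t))) t z) (𝓝[>] t)
      (𝓝 ((1 + (varsigma2 (m t) + e) + varsigma2 (m t)) * C₁)) := by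
    refine Tendsto.const_mul _ ?_
    exact (hasDerivAt_iff_tendsto_slope.1 hd).mono_left
      (nhdsWithin_mono _ fun z hz => ne_of_gt hz)
  have hev := hs.eventually (gt_mem_nhds her)
  obtain ⟨δ, hδ, hcδ⟩ := Metric.continuousWithinAt_iff.1 (hc t htI) e he
  have hev2 : ∀ᶠ z in 𝓝[>] t, z ∈ Ioo t (min b (t + δ)) :=
    Ioo_mem_nhdsGT (lt_min ht.2 (by linarith))
  refine Eventually.frequently ?_
  filter_upwards [hev, hev2] with z hz1 hz2
  have hzb : z < b := hz2.2.trans_le (min_le_left _ _)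
  have hzδ : z < t + δ := hz2.2.trans_le (min_le_right _ _)
  have hzt : 0 < z - t := by linarith [hz2.1]
  have hH := H t z ht.1 hz2.1.le hzb.le (varsigma2 (m t) + e) (by positivity) ?_
  · refine lt_of_le_of_lt ?_ hz1
    rw [slope_def_field, sub_self, mul_zero, Real.exp_zero, mul_div_assoc', inv_mul_eq_div]
    refine div_le_div_of_nonneg_right ?_ hzt.le
    linarith
  · intro r' hr'
    have := hcδ (x := r') ⟨ht.1.trans hr'.1, hr'.2.trans hzb.le⟩ (by
      rw [Real.dist_eq, abs_lt]; constructor <;> linarith [hr'.1, hr'.2])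
    rw [Real.dist_eq, abs_lt] at this
    linarith [this.2]

/-- a priori estimate on the speed of the solution. -/
theorem statement18 {d : ℕ} {U : Type*} [MetricSpace U] [CompactSpace U]
    (f : Ed d → P2 d → U → Ed d) (C₀ C₁ : ℝ) (hC₀ : 0 < C₀) (hC₁ : 0 < C₁)
    (hcont : ∀ (x : Ed d) (μ : P2 d), Continuous fun u : U => f x μ u)
    (hLip : ∀ (x y : Ed d) (μ ν : P2 d) (u : U),
      ‖f x μ u - f y ν u‖ ≤ C₀ * (‖x - y‖ + W2 μ ν))
    (hgrowth : ∀ (x : Ed d) (μ : P2 d) (u : U), ‖f x μ u‖ ≤ C₁ * (1 + ‖x‖ + varsigma2 μ))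
    (mhat : P2 d) (R δ : ℝ) (hR : 0 ≤ R) (hδ : 0 < δ) (u : U)
    (s τ : ℝ) (hτ : 0 < τ) (hτδ : τ < δ)
    (m : ℝ → P2 d) (hsol : SolvesCE f u m s (s + τ))
    (hms : W2 mhat (m s) ≤ R) :
    ∀ t ∈ Icc s (s + τ), W2 (m t) (m s) ≤ C2const C₁ δ (varsigma2 mhat) R * (t - s) := by
  have hab : s < s + τ := by linarith
  have hstep : ∀ t₁ t₂, s ≤ t₁ → t₁ ≤ t₂ → t₂ ≤ s + τ → ∀ S, 0 ≤ S →
      (∀ r ∈ Icc t₁ t₂, varsigma2 (m r) ≤ S) →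
      varsigma2 (m t₂) ≤ varsigma2 (m t₁) +
        (1 + S + varsigma2 (m t₁)) * (Real.exp (C₁ * (t₂ - t₁)) - 1) ∧
      W2 (m t₂) (m t₁) ≤ (1 + S + varsigma2 (m t₁)) * (Real.exp (C₁ * (t₂ - t₁)) - 1) := by
    intro t₁ t₂ h1 h12 h2 S hS hSb
    obtain ⟨X, hX, hmap, hb⟩ := transport hC₀ hC₁ hLip hgrowth hab hsol h1 h12 h2
    have hE : 0 ≤ Real.exp (C₁ * (t₂ - t₁)) - 1 := by
      have := Real.add_one_le_exp (C₁ * (t₂ - t₁))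
      have := mul_nonneg hC₁.le (sub_nonneg.2 h12)
      linarith
    exact transport_est hX hmap hS hE (hb S hSb)
  have hgr := varsigma_gronwall hC₁ hsol.1
    (fun t₁ t₂ h1 h12 h2 S hS hSb => (hstep t₁ t₂ h1 h12 h2 S hS hSb).1)
  intro t ht
  set A : ℝ := varsigma2 mhat + R with hA
  have hmh := varsigma2_nonneg mhat
  have hA0 : 0 ≤ A := by positivity
  have hsA : varsigma2 (m s) ≤ A := (varsigma2_le_add mhat (m s)).trans (by linarith)
  have hs0 := varsigma2_nonneg (m s)
  set x : ℝ := C₁ * δ with hx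
  have hx0 : 0 < x := by positivity
  have hE1 : 1 ≤ Real.exp (2 * x) := Real.one_le_exp (by linarith)
  set S : ℝ := (A + x) * Real.exp (2 * x) with hS
  have hS0 : 0 ≤ S := by positivity
  have hSb : ∀ r ∈ Icc s t, varsigma2 (m r) ≤ S := by
    intro r hr
    refine (hgr r ⟨hr.1, hr.2.trans ht.2⟩).trans ?_
    rw [gronwallBound_of_K_ne_0 (by positivity)]
    have h1 : Real.exp (2 * C₁ * (r - s)) ≤ Real.exp (2 * x) := by
      refine Real.exp_le_exp.2 ?_
      rw [hx, mul_assoc]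
      have : r - s ≤ δ := by linarith [hr.2, ht.2]
      gcongr
    have h2 := exp_sub_one_le (2 * x)
    have h3 : C₁ / (2 * C₁) = 1 / 2 := by field_simp
    simp only [h3]
    have h4 : varsigma2 (m s) * Real.exp (2 * C₁ * (r - s)) ≤ A * Real.exp (2 * x) :=
      mul_le_mul hsA h1 (Real.exp_pos _).le hA0
    rw [hS, add_mul]
    linarith
  have hW := (hstep s t le_rfl ht.1 ht.2 S hS0 hSb).2
  refine hW.trans ?_
  have hh0 : 0 ≤ t - s := by linarith [ht.1]
  have h5 : Real.exp (C₁ * (t - s)) - 1 ≤ C₁ * (t - s) * Real.exp x := by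
    refine (exp_sub_one_le _).trans ?_
    refine mul_le_mul_of_nonneg_left (Real.exp_le_exp.2 ?_) (by positivity)
    exact mul_le_mul_of_nonneg_left (by linarith [ht.2]) hC₁.le
  have h6 : 1 + S + varsigma2 (m s) ≤ 1 + 2 * (A + x) * Real.exp (2 * x) := by
    have : A ≤ S := by
      rw [hS]; nlinarith
    rw [hS] at *
    linarith
  have h7 := mul_le_mul h6 h5 (by
    have := Real.add_one_le_exp (C₁ * (t - s))
    have : 0 ≤ C₁ * (t - s) := by positivity
    linarith) (by positivity)
  refine h7.trans (le_of_eq ?_)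
  rw [C2const, hA, mul_assoc 2 C₁ δ, ← hx]
  ring
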